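/- arXiv:1707.06047 — 6 statements merged into one kernel-verified Lean document; each statement's English description precedes it below -/
import Mathlib

section
/- Let s, k, r be positive integers with r < k, let X ≥ 1 be real, and let z be an integer with 1 ≤ z ≤ X. Set ω_j = 0 for 1 ≤ j < r and ω_j = binom(j,r) for r ≤ j ≤ k. Then I_{s,k,r}(X) is at most the number of integral solutions (u_1,…,u_s,v_1,…,v_s,h) of the system ∑_{i=1}^s (u_i^j − v_i^j) = ω_j·h·z^{j−r} (1 ≤ j ≤ k) with 1 ≤ u_i, v_i ≤ 2X for 1 ≤ i ≤ s and |h| ≤ sX^r. -/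
open Finset

/-- `vinogradovSliceCount s k r X` is the number of integral solutions of the system
`x_1^j + ⋯ + x_s^j = y_1^j + ⋯ + y_s^j` for `1 ≤ j ≤ k`, `j ≠ r`, with `1 ≤ x_i, y_i ≤ X`. -/
noncomputable def vinogradovSliceCount (s k r : ℕ) (X : ℝ) : ℕ :=
  {p : (Fin s → ℤ) × (Fin s → ℤ) |
      (∀ i, 1 ≤ p.1 i ∧ (p.1 i : ℝ) ≤ X) ∧
      (∀ i, 1 ≤ p.2 i ∧ (p.2 i : ℝ) ≤ X) ∧
      ∀ j ∈ Finset.Icc 1 k, j ≠ r →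
        ∑ i, (p.1 i) ^ j = ∑ i, (p.2 i) ^ j}.ncard

theorem count_le_shifted_count
    (s k r : ℕ) (hs : 1 ≤ s) (hr : 1 ≤ r) (hrk : r < k)
    (X : ℝ) (hX : 1 ≤ X) (z : ℤ) (hz1 : 1 ≤ z) (hzX : (z : ℝ) ≤ X) :
    vinogradovSliceCount s k r X ≤
      {q : (Fin s → ℤ) × (Fin s → ℤ) × ℤ |
        (∀ i, 1 ≤ q.1 i ∧ (q.1 i : ℝ) ≤ 2 * X) ∧
        (∀ i, 1 ≤ q.2.1 i ∧ (q.2.1 i : ℝ) ≤ 2 * X) ∧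
        |(q.2.2 : ℝ)| ≤ (s : ℝ) * X ^ r ∧
        ∀ j ∈ Finset.Icc 1 k,
          ∑ i, ((q.1 i) ^ j - (q.2.1 i) ^ j) =
            (if j < r then 0 else (j.choose r : ℤ)) * q.2.2 * z ^ (j - r)}.ncard := by
  classical
  unfold vinogradovSliceCount
  have hfin : {q : (Fin s → ℤ) × (Fin s → ℤ) × ℤ |
        (∀ i, 1 ≤ q.1 i ∧ (q.1 i : ℝ) ≤ 2 * X) ∧
        (∀ i, 1 ≤ q.2.1 i ∧ (q.2.1 i : ℝ) ≤ 2 * X) ∧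
        |(q.2.2 : ℝ)| ≤ (s : ℝ) * X ^ r ∧
        ∀ j ∈ Finset.Icc 1 k,
          ∑ i, ((q.1 i) ^ j - (q.2.1 i) ^ j) =
            (if j < r then 0 else (j.choose r : ℤ)) * q.2.2 * z ^ (j - r)}.Finite := by
    have hbox : (Set.Icc (fun _ : Fin s => (1 : ℤ)) (fun _ => ⌊2 * X⌋)).Finite := Set.finite_Icc _ _
    refine (hbox.prod (hbox.prod
      (Set.finite_Icc (-⌊(s : ℝ) * X ^ r⌋) ⌊(s : ℝ) * X ^ r⌋))).subset ?_
    rintro ⟨u, v, h⟩ ⟨h1, h2, h3, -⟩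
    rw [abs_le] at h3
    refine ⟨⟨fun i => (h1 i).1, fun i => Int.le_floor.2 (h1 i).2⟩,
      ⟨fun i => (h2 i).1, fun i => Int.le_floor.2 (h2 i).2⟩, ?_, Int.le_floor.2 h3.2⟩
    have : -h ≤ ⌊(s : ℝ) * X ^ r⌋ := Int.le_floor.2 (by push_cast; linarith [h3.1])
    simp only
    linarith
  refine Set.ncard_le_ncard_of_injOn
    (fun p => (fun i => p.1 i + z, fun i => p.2 i + z, ∑ i, ((p.1 i) ^ r - (p.2 i) ^ r)))
    ?_ ?_ hfin
  · rintro ⟨x, y⟩ ⟨h1, h2, h3⟩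
    simp only at h1 h2 h3
    refine ⟨fun i => ⟨?_, ?_⟩, fun i => ⟨?_, ?_⟩, ?_, ?_⟩
    · have := (h1 i).1
      simp only
      linarith
    · have := (h1 i).2
      push_cast
      linarith
    · have := (h2 i).1
      simp only
      linarith
    · have := (h2 i).2
      push_cast
      linarith
    · push_cast
      refine (Finset.abs_sum_le_sum_abs _ _).trans ?_
      have hb : ∀ i ∈ (Finset.univ : Finset (Fin s)),
          |((x i : ℝ)) ^ r - (y i : ℝ) ^ r| ≤ X ^ r := by
        intro i _
        have a1 : (0 : ℝ) ≤ x i := by exact_mod_cast (by linarith [(h1 i).1] : (0 : ℤ) ≤ x i)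
        have a2 : (0 : ℝ) ≤ y i := by exact_mod_cast (by linarith [(h2 i).1] : (0 : ℤ) ≤ y i)
        have b1 := pow_le_pow_left₀ a1 (h1 i).2 r
        have b2 := pow_le_pow_left₀ a2 (h2 i).2 r
        have c1 := pow_nonneg a1 r
        have c2 := pow_nonneg a2 r
        rw [abs_le]
        constructor <;> linarith
      refine (Finset.sum_le_sum hb).trans ?_
      simp
    · intro j hj
      rw [Finset.mem_Icc] at hj
      simp only
      have key : ∑ i, ((x i + z) ^ j - (y i + z) ^ j) =
          ∑ m ∈ Finset.range (j + 1),
            (∑ i, ((x i) ^ m - (y i) ^ m)) * (z ^ (j - m) * (j.choose m : ℤ)) := by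
        simp_rw [Finset.sum_mul]
        rw [Finset.sum_comm]
        refine Finset.sum_congr rfl fun i _ => ?_
        rw [add_pow, add_pow, ← Finset.sum_sub_distrib]
        refine Finset.sum_congr rfl fun m _ => ?_
        ring
      have hz : ∀ m ∈ Finset.range (j + 1), m ≠ r →
          (∑ i, ((x i) ^ m - (y i) ^ m)) * (z ^ (j - m) * (j.choose m : ℤ)) = 0 := by
        intro m hm hmr
        rw [Finset.mem_range] at hm
        rcases Nat.eq_zero_or_pos m with rfl | hpos
        · simp
        · rw [Finset.sum_sub_distrib, h3 m (Finset.mem_Icc.2 ⟨hpos, by omega⟩) hmr]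
          simp
      rw [key]
      split_ifs with hjr
      · rw [zero_mul, zero_mul]
        refine Finset.sum_eq_zero fun m hm => hz m hm ?_
        rw [Finset.mem_range] at hm
        omega
      · rw [Finset.sum_eq_single_of_mem r (Finset.mem_range.2 (by omega)) hz]
        ring
  · rintro ⟨x, y⟩ - ⟨x', y'⟩ - h
    simp only [Prod.mk.injEq] at h
    obtain ⟨e1, e2, -⟩ := h
    refine Prod.ext (funext fun i => ?_) (funext fun i => ?_)
    · exact add_right_cancel (congrFun e1 i)
    · exact add_right_cancel (congrFun e2 i)
end

section
/- Let s, k, r be positive integers with r < k. Define the exponential sums h_k(α;X) = ∑_{1≤x≤X} e(α_1 x + ⋯ + α_k x^k) and g_r(α;X) = ∑_{|h|≤sX^r} ∑_{1≤z≤X} e(binom(r,r)·h·α_r + binom(r+1,r)·h·z·α_{r+1} + ⋯ + binom(k,r)·h·z^{k−r}·α_k), where e(θ) = e^{2πiθ}. Then there is a constant C depending at most on s, k and r such that for all sufficiently large real X, I_{s,k,r}(X) ≤ C·X^{−1}·∫_{[0,1)^k} |h_k(α;2X)|^{2s}·g_r(−α;X) dα. -/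
open Finset MeasureTheory

/-- `e(θ) = exp(2πiθ)`. -/
noncomputable def eTheta (θ : ℝ) : ℂ := Complex.exp (2 * Real.pi * Complex.I * θ)

/-- The exponential sum `h_k(α; Y) = ∑_{1 ≤ x ≤ Y} e(α_1 x + ⋯ + α_k x^k)`, where
`α_j` is encoded as `α ⟨j-1, _⟩` for `1 ≤ j ≤ k`. -/
noncomputable def weylSum (k : ℕ) (α : Fin k → ℝ) (Y : ℝ) : ℂ :=
  ∑ x ∈ Finset.Icc (1 : ℤ) ⌊Y⌋, eTheta (∑ j : Fin k, α j * (x : ℝ) ^ ((j : ℕ) + 1))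

/-- The exponential sum
`g_r(α; X) = ∑_{|h| ≤ sX^r} ∑_{1 ≤ z ≤ X} e(∑_{r ≤ j ≤ k} C(j,r) h z^{j-r} α_j)`,
where `α_j` is encoded as `α ⟨j-1, _⟩` for `1 ≤ j ≤ k`; the terms with `j < r` carry
the coefficient `ω_j = 0`. -/
noncomputable def gSum (s k r : ℕ) (α : Fin k → ℝ) (X : ℝ) : ℂ :=
  ∑ h ∈ Finset.Icc (-⌊(s : ℝ) * X ^ r⌋) ⌊(s : ℝ) * X ^ r⌋,
    ∑ z ∈ Finset.Icc (1 : ℤ) ⌊X⌋,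
      eTheta (∑ j : Fin k,
        (if r ≤ (j : ℕ) + 1 then (((j : ℕ) + 1).choose r : ℝ) else 0) *
          (h : ℝ) * (z : ℝ) ^ ((j : ℕ) + 1 - r) * α j)

lemma eTheta_add (a b : ℝ) : eTheta (a + b) = eTheta a * eTheta b := by
  unfold eTheta
  rw [← Complex.exp_add]
  congr 1
  push_cast
  ring

lemma eTheta_zero : eTheta 0 = 1 := by simp [eTheta]

lemma eTheta_sum {ι : Type*} (S : Finset ι) (f : ι → ℝ) :
    eTheta (∑ i ∈ S, f i) = ∏ i ∈ S, eTheta (f i) := by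
  classical
  induction S using Finset.induction_on with
  | empty => simp [eTheta_zero]
  | insert a S ha ih => rw [sum_insert ha, prod_insert ha, eTheta_add, ih]

lemma eTheta_conj (a : ℝ) : (starRingEnd ℂ) (eTheta a) = eTheta (-a) := by
  unfold eTheta
  rw [← Complex.exp_conj]
  congr 1
  simp only [map_mul, Complex.conj_I, Complex.conj_ofReal, map_ofNat, Complex.ofReal_neg]
  ring

lemma eTheta_norm (a : ℝ) : ‖eTheta a‖ = 1 := by
  unfold eTheta
  rw [Complex.norm_exp]
  simp

lemma eTheta_continuous : Continuous eTheta := by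
  unfold eTheta
  fun_prop

lemma eTheta_integral_one (t : ℤ) :
    ∫ a in Set.Ico (0 : ℝ) 1, eTheta (a * (t : ℝ)) = if t = 0 then 1 else 0 := by
  rw [integral_Ico_eq_integral_Ioc, ← intervalIntegral.integral_of_le zero_le_one]
  split_ifs with h
  · subst h
    simp [eTheta_zero]
  · have hc : (2 * Real.pi * Complex.I * (t : ℂ)) ≠ 0 := by
      have : (t : ℂ) ≠ 0 := by exact_mod_cast h
      simp [Real.pi_ne_zero, this]
    have := integral_exp_mul_complex (a := 0) (b := 1) hc
    have h2 : ∀ a : ℝ, eTheta (a * (t : ℝ)) = Complex.exp (2 * Real.pi * Complex.I * (t : ℂ) * a) := by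
      intro a
      unfold eTheta
      congr 1
      push_cast
      ring
    simp only [h2]
    rw [this]
    have h3 : Complex.exp (2 * Real.pi * Complex.I * (t : ℂ) * ((1 : ℝ) : ℂ)) = 1 := by
      rw [Complex.exp_eq_one_iff]
      exact ⟨t, by push_cast; ring⟩
    rw [h3]
    simp

lemma eTheta_integral (k : ℕ) (t : Fin k → ℤ) :
    ∫ α in (Set.univ.pi fun _ : Fin k => Set.Ico (0 : ℝ) 1),
      eTheta (∑ j, α j * (t j : ℝ)) = if t = 0 then 1 else 0 := by
  simp only [eTheta_sum]
  rw [volume_pi, Measure.restrict_pi_pi]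
  rw [integral_fintype_prod_eq_prod (fun (j : Fin k) (a : ℝ) => eTheta (a * (t j : ℝ)))]
  simp only [eTheta_integral_one]
  split_ifs with h
  · subst h
    simp
  · obtain ⟨j, hj⟩ := Function.ne_iff.mp h
    exact prod_eq_zero (mem_univ j) (if_neg hj)

lemma eTheta_integrable (k : ℕ) (t : Fin k → ℤ) :
    IntegrableOn (fun α : Fin k → ℝ => eTheta (∑ j, α j * (t j : ℝ)))
      (Set.univ.pi fun _ : Fin k => Set.Ico (0 : ℝ) 1) := by
  have hf : Continuous (fun α : Fin k → ℝ => eTheta (∑ j, α j * (t j : ℝ))) :=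
    eTheta_continuous.comp (by fun_prop)
  have hc : IsCompact (Set.univ.pi fun _ : Fin k => Set.Icc (0 : ℝ) 1) :=
    isCompact_univ_pi fun _ => isCompact_Icc
  exact (hf.continuousOn.integrableOn_compact hc).mono_set
    (Set.pi_mono fun _ _ => Set.Ico_subset_Icc_self)

/-- The frequency vector attached to a tuple `((u, v), (h, z))`. -/
def freq (s k r : ℕ) (p : ((Fin s → ℤ) × (Fin s → ℤ)) × (ℤ × ℤ)) (j : Fin k) : ℤ :=
  (∑ i, p.1.1 i ^ ((j : ℕ) + 1)) - (∑ i, p.1.2 i ^ ((j : ℕ) + 1)) -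
    (if r ≤ (j : ℕ) + 1 then (((j : ℕ) + 1).choose r : ℤ) else 0) *
      p.2.1 * p.2.2 ^ ((j : ℕ) + 1 - r)

/-- The range of summation. -/
noncomputable def dom (s r : ℕ) (X : ℝ) : Finset (((Fin s → ℤ) × (Fin s → ℤ)) × (ℤ × ℤ)) :=
  ((Fintype.piFinset fun _ : Fin s => Icc (1 : ℤ) ⌊2 * X⌋) ×ˢ
    (Fintype.piFinset fun _ : Fin s => Icc (1 : ℤ) ⌊2 * X⌋)) ×ˢ
  (Icc (-⌊(s : ℝ) * X ^ r⌋) ⌊(s : ℝ) * X ^ r⌋ ×ˢ Icc (1 : ℤ) ⌊X⌋)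

lemma weyl_pow (s k : ℕ) (α : Fin k → ℝ) (Y : ℝ) :
    weylSum k α Y ^ s = ∑ u ∈ Fintype.piFinset fun _ : Fin s => Icc (1 : ℤ) ⌊Y⌋,
      eTheta (∑ j : Fin k, α j * (∑ i, (u i : ℝ) ^ ((j : ℕ) + 1))) := by
  unfold weylSum
  rw [sum_pow']
  · refine sum_congr rfl fun u _ => ?_
    rw [← eTheta_sum, sum_comm]
    simp only [mul_sum]

lemma integrand_eq (s k r : ℕ) (α : Fin k → ℝ) (X : ℝ) :
    (‖weylSum k α (2 * X)‖ ^ (2 * s) : ℂ) * gSum s k r (-α) X =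
      ∑ p ∈ dom s r X, eTheta (∑ j, α j * (freq s k r p j : ℝ)) := by
  have h1 : (‖weylSum k α (2 * X)‖ ^ (2 * s) : ℂ) =
      weylSum k α (2 * X) ^ s * (starRingEnd ℂ) (weylSum k α (2 * X) ^ s) := by
    rw [map_pow, ← mul_pow, Complex.mul_conj', ← pow_mul]
  rw [h1, weyl_pow, map_sum, sum_mul_sum]
  unfold dom gSum
  rw [← sum_product', ← sum_product', sum_mul_sum, ← sum_product']
  refine sum_congr rfl fun p _ => ?_
  rw [eTheta_conj, ← eTheta_add, ← eTheta_add]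
  congr 1
  rw [← sum_neg_distrib, ← sum_add_distrib, ← sum_add_distrib]
  refine sum_congr rfl fun j _ => ?_
  unfold freq
  push_cast
  simp only [Pi.neg_apply]
  ring

lemma integral_eq (s k r : ℕ) (X : ℝ) :
    ∫ α in (Set.univ.pi fun _ : Fin k => Set.Ico (0 : ℝ) 1),
      (‖weylSum k α (2 * X)‖ ^ (2 * s) : ℂ) * gSum s k r (-α) X =
    (((dom s r X).filter fun p => freq s k r p = 0).card : ℂ) := by
  simp only [integrand_eq]
  rw [integral_finsetSum _ fun p _ => eTheta_integrable k _]
  simp only [eTheta_integral]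
  simp

open Classical in
/-- The finset of solutions of the sliced system. -/
noncomputable def sols (s k r : ℕ) (X : ℝ) : Finset ((Fin s → ℤ) × (Fin s → ℤ)) :=
  ((Fintype.piFinset fun _ : Fin s => Icc (1 : ℤ) ⌊X⌋) ×ˢ
    (Fintype.piFinset fun _ : Fin s => Icc (1 : ℤ) ⌊X⌋)).filter fun p =>
      ∀ j ∈ Finset.Icc 1 k, j ≠ r → ∑ i, (p.1 i) ^ j = ∑ i, (p.2 i) ^ j

lemma count_eq (s k r : ℕ) (X : ℝ) : vinogradovSliceCount s k r X = (sols s k r X).card := by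
  unfold vinogradovSliceCount
  rw [← Set.ncard_coe_finset]
  congr 1
  ext p
  simp only [sols, Set.mem_ofPred_eq, coe_filter, mem_product, Fintype.mem_piFinset,
    Finset.mem_Icc, Int.le_floor, and_assoc]

lemma shift_sum (s k r : ℕ) (hrk : r < k) (x y : Fin s → ℤ)
    (hxy : ∀ j ∈ Finset.Icc 1 k, j ≠ r → ∑ i, (x i) ^ j = ∑ i, (y i) ^ j) (z : ℤ)
    (n : ℕ) (hn : n ≤ k) :
    (∑ i, (x i + z) ^ n) - ∑ i, (y i + z) ^ n =
      (if r ≤ n then (n.choose r : ℤ) else 0) * (∑ i, x i ^ r - ∑ i, y i ^ r) * z ^ (n - r) := by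
  have key : (∑ i, (x i + z) ^ n) - ∑ i, (y i + z) ^ n =
      ∑ m ∈ range (n + 1), (∑ i, x i ^ m - ∑ i, y i ^ m) * (z ^ (n - m) * (n.choose m : ℤ)) := by
    simp only [add_pow, sub_mul, sum_sub_distrib, sum_mul]
    rw [sum_comm, sum_comm (s := univ) (t := range (n + 1))]
    simp only [mul_assoc]
  have h0 : ∀ m ∈ range (n + 1), m ≠ r →
      (∑ i, x i ^ m - ∑ i, y i ^ m) * (z ^ (n - m) * (n.choose m : ℤ)) = 0 := by
    intro m hm hmr
    rw [mem_range] at hm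
    rcases Nat.eq_zero_or_pos m with rfl | hpos
    · simp
    · rw [hxy m (Finset.mem_Icc.mpr ⟨hpos, by omega⟩) hmr]
      simp
  rw [key]
  split_ifs with h
  · rw [sum_eq_single_of_mem r (mem_range.mpr (by omega)) h0]
    ring
  · rw [sum_eq_zero fun m hm => h0 m hm (by rw [mem_range] at hm; omega)]
    ring

lemma sum_pow_bounds (s r : ℕ) (X : ℝ) (x : Fin s → ℤ) (hx : ∀ i, 1 ≤ x i ∧ (x i : ℝ) ≤ X) :
    0 ≤ ((∑ i, x i ^ r : ℤ) : ℝ) ∧ ((∑ i, x i ^ r : ℤ) : ℝ) ≤ s * X ^ r := by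
  have hp : ∀ i, (0 : ℝ) ≤ x i := fun i => by
    have := (hx i).1
    exact_mod_cast (by omega : 0 ≤ x i)
  push_cast
  refine ⟨sum_nonneg fun i _ => pow_nonneg (hp i) r, ?_⟩
  calc ∑ i, (x i : ℝ) ^ r ≤ ∑ _i : Fin s, X ^ r :=
        sum_le_sum fun i _ => pow_le_pow_left₀ (hp i) (hx i).2 r
    _ = s * X ^ r := by simp

lemma card_bound (s k r : ℕ) (hrk : r < k) (X : ℝ) :
    (sols s k r X).card * (Icc (1 : ℤ) ⌊X⌋).card ≤
      ((dom s r X).filter fun p => freq s k r p = 0).card := by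
  rw [← card_product]
  refine card_le_card_of_injOn (fun q : ((Fin s → ℤ) × (Fin s → ℤ)) × ℤ =>
    (((fun i => q.1.1 i + q.2), (fun i => q.1.2 i + q.2)),
      ((∑ i, q.1.1 i ^ r - ∑ i, q.1.2 i ^ r), q.2))) ?_ ?_
  · rintro ⟨⟨x, y⟩, z⟩ hq
    simp only [sols, coe_product, Set.mem_prod, mem_coe, mem_filter, mem_product,
      Fintype.mem_piFinset, Finset.mem_Icc, Int.le_floor] at hq
    obtain ⟨⟨⟨hx, hy⟩, hxy⟩, hz1, hz2⟩ := hq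
    have bx := sum_pow_bounds s r X x hx
    have bY := sum_pow_bounds s r X y hy
    simp only [dom, mem_coe, mem_filter, mem_product, Fintype.mem_piFinset, Finset.mem_Icc,
      Int.le_floor]
    refine ⟨⟨⟨fun i => ⟨?_, ?_⟩, fun i => ⟨?_, ?_⟩⟩, ⟨?_, ?_⟩, hz1, hz2⟩, ?_⟩
    · have := (hx i).1
      omega
    · have := (hx i).2
      push_cast
      linarith
    · have := (hy i).1
      omega
    · have := (hy i).2
      push_cast
      linarith
    · rw [neg_le, Int.le_floor, Int.cast_neg, Int.cast_sub]
      linarith [bx.1, bY.2]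
    · rw [Int.cast_sub]
      linarith [bx.2, bY.1]
    · funext j
      have := shift_sum s k r hrk x y
        (fun j hj => hxy j (Finset.mem_Icc.mp hj)) z ((j : ℕ) + 1) (by omega)
      simp only [freq, Pi.zero_apply]
      rw [this, sub_self]
  · rintro ⟨⟨x, y⟩, z⟩ _ ⟨⟨xx, yy⟩, zz⟩ _ h
    simp only [Prod.mk.injEq] at h
    obtain ⟨⟨h1, h2⟩, _, h3⟩ := h
    subst h3
    have e1 : x = xx := funext fun i => by
      have := congrFun h1 i
      simpa using this
    have e2 : y = yy := funext fun i => by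
      have := congrFun h2 i
      simpa using this
    rw [e1, e2]

theorem count_le_integral_bound
    (s k r : ℕ) (hs : 1 ≤ s) (hr : 1 ≤ r) (hrk : r < k) :
    ∃ C X₀ : ℝ, ∀ X : ℝ, X₀ ≤ X →
      (vinogradovSliceCount s k r X : ℝ) ≤
        C * X⁻¹ *
          (∫ α in (Set.univ.pi fun _ : Fin k => Set.Ico (0 : ℝ) 1),
            (‖weylSum k α (2 * X)‖ ^ (2 * s) : ℂ) * gSum s k r (-α) X).re := by
  refine ⟨2, 1, fun X hX => ?_⟩
  rw [integral_eq, Complex.natCast_re, count_eq]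
  have hX0 : 0 < X := by linarith
  have hb : ((sols s k r X).card : ℝ) * ((Icc (1 : ℤ) ⌊X⌋).card : ℝ) ≤
      (((dom s r X).filter fun p => freq s k r p = 0).card : ℝ) := by
    exact_mod_cast card_bound s k r hrk X
  have hf1 : (1 : ℤ) ≤ ⌊X⌋ := Int.le_floor.mpr (by simpa using hX)
  have hc : ((Icc (1 : ℤ) ⌊X⌋).card : ℝ) = (⌊X⌋ : ℝ) := by
    have : ((Icc (1 : ℤ) ⌊X⌋).card : ℤ) = ⌊X⌋ := by
      rw [Int.card_Icc]
      omega
    exact_mod_cast this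
  have hf2 : X / 2 ≤ (⌊X⌋ : ℝ) := by
    have h1 : (1 : ℝ) ≤ (⌊X⌋ : ℝ) := by exact_mod_cast hf1
    have h2 := Int.lt_floor_add_one X
    linarith
  rw [hc] at hb
  have hS : (0 : ℝ) ≤ ((sols s k r X).card : ℝ) := Nat.cast_nonneg _
  have h3 := (mul_le_mul_of_nonneg_left hf2 hS).trans hb
  have h4 : ((sols s k r X).card : ℝ) = 2 * X⁻¹ * (((sols s k r X).card : ℝ) * (X / 2)) := by
    field_simp
  rw [h4]
  exact mul_le_mul_of_nonneg_left h3 (by positivity)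
end

section
/- Let s ≥ 1 and r ≥ 1 be integers and let f = (f_1,…,f_{2s−1}) be a well-conditioned (2s−1)-tuple of polynomials with integer coefficients. Then the number of integral solutions (z_1,…,z_{2s},h_1,…,h_{2s}) of the system ∑_{i=1}^{2s} h_i f_j(z_i) = 0 (1 ≤ j ≤ 2s−1), with 1 ≤ z_i ≤ X and |h_i| ≤ X^r for 1 ≤ i ≤ 2s, and which additionally satisfy h_i·f_1(z_i) = 0 for every i with 1 ≤ i ≤ 2s, is ≪ X^{(2s−1)r+1}, with implicit constant depending at most on s, r and the coefficients of f. -/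
open Finset

/-- A `t`-tuple `f = (f_1, …, f_t)` of nonzero integer polynomials is *well-conditioned*
if their degrees satisfy `0 ≤ k_t < k_{t-1} < ⋯ < k_1` and there is no positive integer
`z` with `f_1(z) = ⋯ = f_t(z) = 0`. -/
def WellConditioned {t : ℕ} (f : Fin t → Polynomial ℤ) : Prop :=
  (∀ j, f j ≠ 0) ∧
  (∀ i j : Fin t, i < j → (f j).natDegree < (f i).natDegree) ∧
  (∀ z : ℤ, 0 < z → ∃ j, (f j).eval z ≠ 0)

theorem count_type_S0_solutions
    (s r : ℕ) (hs : 1 ≤ s) (hr : 1 ≤ r)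
    (f : Fin (2 * s - 1) → Polynomial ℤ) (hf : WellConditioned f) :
    ∃ C X₀ : ℝ, ∀ X : ℝ, X₀ ≤ X →
      ({p : (Fin (2 * s) → ℤ) × (Fin (2 * s) → ℤ) |
          (∀ i, |(p.1 i : ℝ)| ≤ X ^ r) ∧
          (∀ i, 1 ≤ p.2 i ∧ (p.2 i : ℝ) ≤ X) ∧
          (∀ j, ∑ i, p.1 i * (f j).eval (p.2 i) = 0) ∧
          (∀ i, p.1 i * (f ⟨0, by omega⟩).eval (p.2 i) = 0)}.ncard : ℝ) ≤
        C * X ^ ((2 * s - 1) * r + 1) := by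
  classical
  obtain ⟨hne, -, hz⟩ := hf
  set g := f ⟨0, by omega⟩ with hg
  have hg0 : g ≠ 0 := hne _
  set R : Finset ℤ := g.roots.toFinset with hR
  refine ⟨(1 + 3 * (R.card : ℝ)) ^ (2 * s - 1), 1, fun X hX => ?_⟩
  set i0 : Fin (2 * s) := ⟨0, by omega⟩ with hi0
  set N : ℤ := ⌊X⌋ with hN
  set M : ℤ := ⌊X ^ r⌋ with hM
  have hXr : X ≤ X ^ r := le_self_pow₀ hX (by omega)
  have hXr1 : 1 ≤ X ^ r := hX.trans hXr
  have hN1 : 1 ≤ N := Int.le_floor.2 (by simpa using hX)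
  have hM1 : 1 ≤ M := Int.le_floor.2 (by simpa using hXr1)
  have hNX : (N : ℝ) ≤ X := Int.floor_le X
  have hMX : (M : ℝ) ≤ X ^ r := Int.floor_le _
  let Q : Finset (ℤ × ℤ) := {0} ×ˢ Finset.Icc 1 N
  let P : Finset (ℤ × ℤ) := Q ∪ (Finset.Icc (-M) M ×ˢ R)
  have hQ : (Q.card : ℝ) ≤ X := by
    have h1 : ((Q.card : ℤ)) = N := by
      simp [Q]; omega
    have h2 : (Q.card : ℝ) = N := by exact_mod_cast h1
    rw [h2]; exact hNX
  have hP : (P.card : ℝ) ≤ (1 + 3 * (R.card : ℝ)) * X ^ r := by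
    have h1 : P.card ≤ Q.card + (Finset.Icc (-M) M).card * R.card := by
      refine (Finset.card_union_le _ _).trans ?_
      rw [Finset.card_product (Finset.Icc (-M) M)]
    have h2 : (((Finset.Icc (-M) M).card : ℤ)) = 2 * M + 1 := by
      simp; omega
    have h3 : (((Finset.Icc (-M) M).card : ℝ)) = 2 * M + 1 := by exact_mod_cast h2
    have h4 : (P.card : ℝ) ≤ Q.card + (Finset.Icc (-M) M).card * R.card := by exact_mod_cast h1
    rw [h3] at h4
    have h5 : (2 * (M : ℝ) + 1) * R.card ≤ (3 * X ^ r) * R.card := by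
      gcongr; linarith
    linarith
  let T : Fin (2 * s) → Finset (ℤ × ℤ) := fun i => if i = i0 then Q else P
  let F : (Fin (2 * s) → ℤ) × (Fin (2 * s) → ℤ) → (Fin (2 * s) → ℤ × ℤ) :=
    fun p i => (if i = i0 then 0 else p.1 i, p.2 i)
  have hcard : ((Fintype.piFinset T).card : ℝ) ≤
      (1 + 3 * (R.card : ℝ)) ^ (2 * s - 1) * X ^ ((2 * s - 1) * r + 1) := by
    have h1 : (Fintype.piFinset T).card = Q.card * P.card ^ (2 * s - 1) := by
      rw [Fintype.card_piFinset, ← Finset.mul_prod_erase _ _ (Finset.mem_univ i0)]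
      have hT : (T i0).card = Q.card := by simp [T]
      rw [hT]
      congr 1
      · rw [Finset.prod_congr rfl (g := fun _ => P.card)]
        · simp
        · intro i hi
          simp [T, Finset.ne_of_mem_erase hi]
    rw [h1]; push_cast
    calc (Q.card : ℝ) * (P.card : ℝ) ^ (2 * s - 1)
        ≤ X * ((1 + 3 * (R.card : ℝ)) * X ^ r) ^ (2 * s - 1) := by gcongr
      _ = _ := by rw [mul_pow, ← pow_mul, pow_succ, mul_comm r]; ring
  refine le_trans ?_ hcard
  rw [← Set.ncard_coe_finset]
  refine Nat.cast_le.2 ?_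
  refine Set.ncard_le_ncard_of_injOn F ?_ ?_ (Finset.finite_toSet _)
  · rintro ⟨h, z⟩ ⟨hh, hzz, -, h0⟩
    simp only [Finset.mem_coe, Fintype.mem_piFinset]
    intro i
    have hzi := hzz i
    have hzN : z i ≤ N := Int.le_floor.2 hzi.2
    by_cases hi : i = i0
    · simpa [T, F, Q, hi] using hi ▸ ⟨hzi.1, hzN⟩
    · simp only [T, F, hi, if_false, P, Q, Finset.mem_union, Finset.mem_product,
        Finset.mem_singleton, Finset.mem_Icc]
      rcases mul_eq_zero.1 (h0 i) with hc | hc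
      · exact Or.inl ⟨hc, hzi.1, hzN⟩
      · refine Or.inr ⟨?_, ?_⟩
        · have := abs_le.1 (hh i)
          have h1 : h i ≤ M := Int.le_floor.2 this.2
          have h2 : - h i ≤ M := Int.le_floor.2 (by push_cast; linarith [this.1])
          exact ⟨by omega, h1⟩
        · simp only [hR, Multiset.mem_toFinset]
          exact (Polynomial.mem_roots hg0).2 hc
  · rintro ⟨h, z⟩ ⟨-, hzz, hS, -⟩ ⟨h', z'⟩ ⟨-, -, hS', -⟩ hF
    have hzeq : z' = z := by
      funext i; exact ((Prod.ext_iff.1 (congrFun hF i)).2).symm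
    subst hzeq
    have hother : ∀ i, i ≠ i0 → h i = h' i := by
      intro i hi
      simpa [F, hi] using (Prod.ext_iff.1 (congrFun hF i)).1
    obtain ⟨j, hj⟩ := hz (z' i0) (by have := (hzz i0).1; simp only at this; omega)
    have e1 := hS j
    have e2 := hS' j
    simp only at e1 e2
    rw [← Finset.add_sum_erase _ _ (Finset.mem_univ i0)] at e1 e2
    rw [Finset.sum_congr rfl (g := fun i => h' i * (f j).eval (z' i))
      (fun i hi => by rw [hother i (Finset.ne_of_mem_erase hi)])] at e1
    have e3 : h i0 = h' i0 := mul_right_cancel₀ hj (by linarith)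
    have : h = h' := by
      funext i
      by_cases hi : i = i0
      · rw [hi, e3]
      · exact hother i hi
    rw [this]
end

section
/- Let s ≥ 2 and r ≥ 1 be integers, let f = (f_1,…,f_{2s−1}) be a well-conditioned (2s−1)-tuple of polynomials with integer coefficients, and let Ψ ∈ ℤ[w_1,…,w_{2s−1}] be a nonzero polynomial such that Ψ(σ_{1,s−1}(z;h),…,σ_{2s−1,s−1}(z;h)) = 0 identically while Ψ(σ_{1,s}(z;h),…,σ_{2s−1,s}(z;h)) is not the zero polynomial. Then for each ε > 0, the number of integral solutions (z_1,…,z_{2s},h_1,…,h_{2s}) of the system ∑_{i=1}^{2s} h_i f_j(z_i) = 0 (1 ≤ j ≤ 2s−1), with 1 ≤ z_i ≤ X and |h_i| ≤ X^r, for which there exists an s-element subset {i_1 < ⋯ < i_s} of {1,…,2s} with Ψ(σ_{1,s}(z_{i_1},…,z_{i_s};h_{i_1},…,h_{i_s}),…,σ_{2s−1,s}(z_{i_1},…,z_{i_s};h_{i_1},…,h_{i_s})) ≠ 0, is ≪ X^{(r+1)s+ε}, with implicit constant depending at most on s, r, ε, Ψ and the coefficients of f. -/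
open Finset

/-- `sigmaPoly f n j` is the polynomial `σ_{j,n}(z;h) = h_1 f_j(z_1) + ⋯ + h_n f_j(z_n)`
in the variables `z_1, …, z_n` (encoded as `Sum.inl`) and `h_1, …, h_n` (encoded as
`Sum.inr`). -/
noncomputable def sigmaPoly {t : ℕ} (f : Fin t → Polynomial ℤ) (n : ℕ) (j : Fin t) :
    MvPolynomial (Fin n ⊕ Fin n) ℤ :=
  ∑ i : Fin n,
    MvPolynomial.X (Sum.inr i) * Polynomial.aeval (MvPolynomial.X (Sum.inl i)) (f j)


theorem css_dvd_eval_sub {t : ℕ} (Ψ : MvPolynomial (Fin t) ℤ) (d : ℤ) (a b : Fin t → ℤ)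
    (hab : ∀ j, d ∣ a j - b j) : d ∣ MvPolynomial.eval a Ψ - MvPolynomial.eval b Ψ := by
  induction Ψ using MvPolynomial.induction_on with
  | C c => simp
  | add p q hp hq =>
    have := dvd_add hp hq
    simp only [map_add]
    rwa [show MvPolynomial.eval a p + MvPolynomial.eval a q
      - (MvPolynomial.eval b p + MvPolynomial.eval b q)
      = MvPolynomial.eval a p - MvPolynomial.eval b p
        + (MvPolynomial.eval a q - MvPolynomial.eval b q) by ring]
  | mul_X p i hp =>
    have h2 := dvd_add (hp.mul_right (a i)) ((hab i).mul_left (MvPolynomial.eval b p))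
    simp only [map_mul, MvPolynomial.eval_X]
    rwa [show MvPolynomial.eval a p * a i - MvPolynomial.eval b p * b i
      = (MvPolynomial.eval a p - MvPolynomial.eval b p) * a i
        + MvPolynomial.eval b p * (a i - b i) by ring]

theorem css_vanish {t m : ℕ} (f : Fin t → Polynomial ℤ) (Ψ : MvPolynomial (Fin t) ℤ)
    (hv : MvPolynomial.aeval (fun j => sigmaPoly f m j) Ψ = 0) (h z : Fin m → ℤ) :
    MvPolynomial.eval (fun j => ∑ l, h l * (f j).eval (z l)) Ψ = 0 := by
  have h1 := congrArg (MvPolynomial.aeval (R := ℤ) (S₁ := ℤ) (Sum.elim z h)) hv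
  rw [← MvPolynomial.coe_aeval_eq_eval]
  rw [map_zero, ← AlgHom.comp_apply, MvPolynomial.comp_aeval] at h1
  rw [← h1]
  simp only [RingHom.coe_coe]
  congr 2
  funext j
  simp only [sigmaPoly, map_sum, map_mul, MvPolynomial.aeval_X, Sum.elim_inr]
  refine Finset.sum_congr rfl fun i _ => ?_
  rw [← Polynomial.aeval_algHom_apply]
  simp

theorem css_dvd_h {t m : ℕ} (f : Fin t → Polynomial ℤ) (Ψ : MvPolynomial (Fin t) ℤ)
    (hv : MvPolynomial.aeval (fun j => sigmaPoly f m j) Ψ = 0) (h z : Fin (m + 1) → ℤ)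
    (i : Fin (m + 1)) :
    h i ∣ MvPolynomial.eval (fun j => ∑ l, h l * (f j).eval (z l)) Ψ := by
  have h1 := css_vanish f Ψ hv (fun l => h (i.succAbove l)) (fun l => z (i.succAbove l))
  have h2 := css_dvd_eval_sub Ψ (h i) (fun j => ∑ l, h l * (f j).eval (z l))
    (fun j => ∑ l, h (i.succAbove l) * (f j).eval (z (i.succAbove l))) (by
      intro j
      rw [Fin.sum_univ_succAbove _ i, add_sub_cancel_right]
      exact dvd_mul_right _ _)
  rwa [h1, sub_zero] at h2

theorem css_dvd_z {t m : ℕ} (f : Fin t → Polynomial ℤ) (Ψ : MvPolynomial (Fin t) ℤ)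
    (hv : MvPolynomial.aeval (fun j => sigmaPoly f m j) Ψ = 0) (h z : Fin (m + 1) → ℤ)
    (i k : Fin (m + 1)) (hik : k ≠ i) :
    z i - z k ∣ MvPolynomial.eval (fun j => ∑ l, h l * (f j).eval (z l)) Ψ := by
  obtain ⟨k', rfl⟩ := Fin.exists_succAbove_eq hik
  have h1 := css_vanish f Ψ hv (fun l => h (i.succAbove l) + if l = k' then h i else 0)
    (fun l => z (i.succAbove l))
  have h2 := css_dvd_eval_sub Ψ (z i - z (i.succAbove k'))
    (fun j => ∑ l, h l * (f j).eval (z l))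
    (fun j => ∑ l, (h (i.succAbove l) + if l = k' then h i else 0)
      * (f j).eval (z (i.succAbove l))) (by
      intro j
      rw [Fin.sum_univ_succAbove _ i]
      simp only [add_mul, Finset.sum_add_distrib, ite_mul, zero_mul, Finset.sum_ite_eq', Finset.mem_univ, if_true]
      have := (Polynomial.sub_dvd_eval_sub (z i) (z (i.succAbove k')) (f j)).mul_left (h i)
      refine this.trans (dvd_of_eq ?_)
      ring)
  rwa [h1, sub_zero] at h2

/-- Translates of a polynomial of large degree with nonzero weights are nonconstant. -/
theorem css_translate_ne {s : ℕ} (hs : 0 < s) (f : Polynomial ℤ) (hf : s ≤ f.natDegree)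
    (h d : Fin s → ℤ) (hh : ∀ i, h i ≠ 0) (hd : Function.Injective d) (c : ℤ) :
    ∑ i, Polynomial.C (h i) * Polynomial.taylor (d i) f - Polynomial.C c ≠ 0 := by
  intro h0
  have hf0 : f ≠ 0 := by
    rintro rfl
    simp at hf
    omega
  have key : ∀ m, m < s → ∑ i, h i * d i ^ m = 0 := by
    intro m
    induction m using Nat.strong_induction_on with
    | _ m ih =>
      intro hm
      have h1 := congrArg (fun p => Polynomial.coeff p (f.natDegree - m)) h0
      simp only [Polynomial.coeff_sub, Polynomial.finsetSum_coeff, Polynomial.coeff_C_mul,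
        Polynomial.coeff_zero, Polynomial.taylor_coeff] at h1
      rw [Polynomial.coeff_C_of_ne_zero (by omega), sub_zero] at h1
      have hdeg : (Polynomial.hasseDeriv (f.natDegree - m) f).natDegree < m + 1 := by
        have := Polynomial.natDegree_hasseDeriv_le f (f.natDegree - m)
        omega
      simp_rw [Polynomial.eval_eq_sum_range' hdeg, Finset.mul_sum] at h1
      rw [Finset.sum_comm, Finset.sum_range_succ, Finset.sum_eq_zero, zero_add] at h1
      · have h2 : (Polynomial.hasseDeriv (f.natDegree - m) f).coeff m * ∑ i, h i * d i ^ m = 0 := by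
          rw [← h1, Finset.mul_sum]
          exact Finset.sum_congr rfl fun i _ => by ring
        rcases mul_eq_zero.1 h2 with h3 | h3
        · exfalso
          rw [Polynomial.hasseDeriv_coeff, show m + (f.natDegree - m) = f.natDegree by omega] at h3
          rcases mul_eq_zero.1 h3 with h4 | h4
          · have : 0 < f.natDegree.choose (f.natDegree - m) := Nat.choose_pos (by omega)
            simp only [Nat.cast_eq_zero] at h4
            omega
          · exact hf0 (Polynomial.leadingCoeff_eq_zero.1 h4)
        · exact h3
      · intro l hl
        rw [Finset.mem_range] at hl
        have := ih l hl (by omega)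
        calc _ = (Polynomial.hasseDeriv (f.natDegree - m) f).coeff l * ∑ i, h i * d i ^ l := by
              rw [Finset.mul_sum]
              exact Finset.sum_congr rfl fun i _ => by ring
          _ = 0 := by rw [this, mul_zero]
  have := Matrix.eq_zero_of_forall_pow_sum_mul_pow_eq_zero hd (v := h) (fun i => key i i.2)
  exact hh ⟨0, hs⟩ (congrFun this _)

theorem css_eval_bound {t : ℕ} (Ψ : MvPolynomial (Fin t) ℤ) :
    ∃ (C : ℝ) (A : ℕ), 1 ≤ C ∧ ∀ (Y : ℝ) (w : Fin t → ℤ), 1 ≤ Y → (∀ j, |(w j : ℝ)| ≤ Y) →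
      |((MvPolynomial.eval w Ψ : ℤ) : ℝ)| ≤ C * Y ^ A := by
  induction Ψ using MvPolynomial.induction_on with
  | C c =>
    refine ⟨|(c : ℝ)| + 1, 0, by linarith [abs_nonneg (c : ℝ)], fun Y w hY hw => ?_⟩
    simp
  | add p q hp hq =>
    obtain ⟨C, A, hC, h1⟩ := hp
    obtain ⟨D, B, hD, h2⟩ := hq
    refine ⟨C + D, A + B, by linarith, fun Y w hY hw => ?_⟩
    have e1 : Y ^ A ≤ Y ^ (A + B) := pow_le_pow_right₀ hY (by omega)
    have e2 : Y ^ B ≤ Y ^ (A + B) := pow_le_pow_right₀ hY (by omega)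
    have := h1 Y w hY hw
    have := h2 Y w hY hw
    rw [map_add, Int.cast_add]
    refine (abs_add_le _ _).trans ?_
    nlinarith
  | mul_X p i hp =>
    obtain ⟨C, A, hC, h1⟩ := hp
    refine ⟨C, A + 1, hC, fun Y w hY hw => ?_⟩
    rw [map_mul, Int.cast_mul, abs_mul, MvPolynomial.eval_X, pow_succ, ← mul_assoc]
    exact mul_le_mul (h1 Y w hY hw) (hw i) (abs_nonneg _) (by positivity)

theorem css_poly_bound (f : Polynomial ℤ) :
    ∃ (C : ℝ) (A : ℕ), 1 ≤ C ∧ ∀ (Y : ℝ) (z : ℤ), 1 ≤ Y → |(z : ℝ)| ≤ Y →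
      |((f.eval z : ℤ) : ℝ)| ≤ C * Y ^ A := by
  obtain ⟨C, A, hC, h⟩ := css_eval_bound (t := 1) (Polynomial.aeval (MvPolynomial.X 0) f)
  refine ⟨C, A, hC, fun Y z hY hz => ?_⟩
  have := h Y (fun _ => z) hY (fun _ => hz)
  convert this using 4
  rw [← MvPolynomial.coe_aeval_eq_eval, RingHom.coe_coe, ← Polynomial.aeval_algHom_apply]
  simp

theorem css_divisor_bound (δ : ℝ) (hδ : 0 < δ) :
    ∃ C : ℝ, 1 ≤ C ∧ ∀ n : ℕ, n ≠ 0 → (n.divisors.card : ℝ) ≤ C * (n : ℝ) ^ δ := by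
  have hl2 : 0 < Real.log 2 := Real.log_pos (by norm_num)
  set M : ℝ := max 1 (1 / (δ * Real.log 2)) with hM
  have hM1 : 1 ≤ M := le_max_left _ _
  have hM2 : 1 ≤ M * (δ * Real.log 2) := by
    have : 1 / (δ * Real.log 2) ≤ M := le_max_right _ _
    rwa [div_le_iff₀ (by positivity)] at this
  set P : ℕ := ⌈(2 : ℝ) ^ (1 / δ)⌉₊ with hP
  refine ⟨M ^ P, one_le_pow₀ hM1, fun n hn => ?_⟩
  rw [Nat.card_divisors hn]
  have hprod : (n : ℝ) ^ δ = ∏ p ∈ n.primeFactors, ((p : ℝ) ^ (n.factorization p : ℝ)) ^ δ := by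
    conv_lhs => rw [← Nat.prod_factorization_pow_eq_self hn]
    rw [Finsupp.prod, Nat.support_factorization, Nat.cast_prod, Real.finsetProd_rpow]
    · simp
    · intro i _
      positivity
  have hcp : ∏ p ∈ n.primeFactors, (if p < P then M else 1) ≤ M ^ P := by
    rw [Finset.prod_ite, Finset.prod_const, Finset.prod_const_one, mul_one]
    apply pow_le_pow_right₀ hM1
    calc _ ≤ (Finset.range P).card := Finset.card_le_card (by
            intro p hp
            simp only [Finset.mem_filter] at hp
            exact Finset.mem_range.2 hp.2)
      _ = P := Finset.card_range P
  push_cast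
  calc ∏ p ∈ n.primeFactors, ((n.factorization p : ℝ) + 1)
      ≤ ∏ p ∈ n.primeFactors, ((if p < P then M else 1) *
          ((p : ℝ) ^ (n.factorization p : ℝ)) ^ δ) := by
        apply Finset.prod_le_prod
        · intros; positivity
        · intro p hp
          have hp2 : (2 : ℝ) ≤ p := by exact_mod_cast (Nat.prime_of_mem_primeFactors hp).two_le
          set a := n.factorization p
          rw [← Real.rpow_mul (by positivity), mul_comm (a : ℝ) δ, ]
          split_ifs with hlt
          · have e1 : (2 : ℝ) ^ (δ * a) ≤ (p : ℝ) ^ (δ * a) :=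
              Real.rpow_le_rpow (by norm_num) hp2 (by positivity)
            have e2 : Real.log 2 * (δ * a) + 1 ≤ (2 : ℝ) ^ (δ * a) := by
              rw [Real.rpow_def_of_pos (by norm_num)]
              exact Real.add_one_le_exp _
            have ha : (0 : ℝ) ≤ a := by positivity
            nlinarith [mul_le_mul_of_nonneg_right hM2 ha]
          · have e0 : (2 : ℝ) ^ (1 / δ) ≤ p :=
              (Nat.le_ceil _).trans (by exact_mod_cast not_lt.1 hlt)
            have e1 : (2 : ℝ) ≤ (p : ℝ) ^ δ := by
              calc (2 : ℝ) = ((2 : ℝ) ^ (1 / δ)) ^ δ := by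
                    rw [← Real.rpow_mul (by norm_num), one_div_mul_cancel hδ.ne', Real.rpow_one]
                _ ≤ _ := Real.rpow_le_rpow (by positivity) e0 hδ.le
            rw [one_mul, Real.rpow_mul (by positivity), Real.rpow_natCast]
            calc (a : ℝ) + 1 ≤ (2 : ℝ) ^ a := by exact_mod_cast Nat.lt_two_pow_self
              _ ≤ _ := by gcongr
    _ = (∏ p ∈ n.primeFactors, (if p < P then M else 1)) * (n : ℝ) ^ δ := by
        rw [Finset.prod_mul_distrib, ← hprod]
    _ ≤ _ := by gcongr

theorem css_core {t m : ℕ} (f : Fin t → Polynomial ℤ) (Ψ : MvPolynomial (Fin t) ℤ)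
    (hv : MvPolynomial.aeval (fun j => sigmaPoly f m j) Ψ = 0) (j0 : Fin t)
    (hdeg : m + 1 ≤ (f j0).natDegree) (w : Fin t → ℤ) (hw : MvPolynomial.eval w Ψ ≠ 0)
    (F : Finset ((Fin (m + 1) → ℤ) × (Fin (m + 1) → ℤ)))
    (hF : ∀ q ∈ F, ∀ j, ∑ l, q.1 l * (f j).eval (q.2 l) = w j) :
    F.card ≤ (f j0).natDegree *
      (3 * (MvPolynomial.eval w Ψ).natAbs.divisors.card) ^ (2 * (m + 1)) := by
  classical
  set N := MvPolynomial.eval w Ψ with hN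
  set V : Finset ℕ := N.natAbs.divisors with hV
  set D : Finset ℤ := insert 0 (V.image (fun n : ℕ => (n : ℤ)) ∪ V.image (fun n : ℕ => -(n : ℤ)))
    with hDdef
  have hV1 : 1 ≤ V.card := Finset.card_pos.2 ⟨1, by simp [hV, hw]⟩
  have hDc : D.card ≤ 3 * V.card := by
    have h1 := Finset.card_insert_le (0 : ℤ)
      (V.image (fun n : ℕ => (n : ℤ)) ∪ V.image (fun n : ℕ => -(n : ℤ)))
    have h2 := Finset.card_union_le (V.image (fun n : ℕ => (n : ℤ)))
      (V.image (fun n : ℕ => -(n : ℤ)))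
    have h3 : (V.image (fun n : ℕ => (n : ℤ))).card ≤ V.card := Finset.card_image_le
    have h4 : (V.image (fun n : ℕ => -(n : ℤ))).card ≤ V.card := Finset.card_image_le
    rw [hDdef]
    omega
  have hDm : ∀ a : ℤ, a ∣ N → a ∈ D := by
    intro a ha
    have h1 : a.natAbs ∈ V := by
      rw [hV, Nat.mem_divisors]
      exact ⟨Int.natAbs_dvd_natAbs.2 ha, by simpa using hw⟩
    rw [hDdef, Finset.mem_insert, Finset.mem_union, Finset.mem_image, Finset.mem_image]
    right
    rcases Int.natAbs_eq a with h | h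
    · exact Or.inl ⟨_, h1, h.symm⟩
    · exact Or.inr ⟨_, h1, h.symm⟩
  have hD0 : (0 : ℤ) ∈ D := Finset.mem_insert_self _ _
  have hwq : ∀ q ∈ F, (fun j => ∑ l, q.1 l * (f j).eval (q.2 l)) = w :=
    fun q hq => funext (hF q hq)
  have hdh : ∀ q ∈ F, ∀ i, q.1 i ∣ N := by
    intro q hq i
    have := css_dvd_h f Ψ hv q.1 q.2 i
    rwa [hwq q hq] at this
  have hdz : ∀ q ∈ F, ∀ i k, k ≠ i → q.2 i - q.2 k ∣ N := by
    intro q hq i k hik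
    have := css_dvd_z f Ψ hv q.1 q.2 i k hik
    rwa [hwq q hq] at this
  set T := (Fintype.piFinset (fun _ : Fin (m + 1) => D)) ×ˢ
    (Fintype.piFinset (fun _ : Fin (m + 1) => D)) with hT
  have hTc : T.card ≤ (3 * V.card) ^ (2 * (m + 1)) := by
    rw [hT, Finset.card_product, Fintype.card_piFinset_const, ← pow_add, ← two_mul]
    simpa using Nat.pow_le_pow_left hDc _
  refine (Finset.card_le_mul_card_image_of_maps_to (t := T)
    (f := fun q => (q.1, fun l => q.2 l - q.2 0)) ?_ (f j0).natDegree ?_).trans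
    (Nat.mul_le_mul_left _ hTc)
  · intro q hq
    rw [hT, Finset.mem_product, Fintype.mem_piFinset, Fintype.mem_piFinset]
    refine ⟨fun i => hDm _ (hdh q hq i), fun i => ?_⟩
    by_cases h0 : (0 : Fin (m + 1)) = i
    · subst h0
      simpa using hD0
    · exact hDm _ (hdz q hq i 0 h0)
  · rintro ⟨h, d⟩ -
    rcases Finset.eq_empty_or_nonempty
      (F.filter fun q => (q.1, fun l => q.2 l - q.2 0) = (h, d)) with he | ⟨q0, hq0⟩
    · rw [he]
      simp
    rw [Finset.mem_filter, Prod.mk.injEq] at hq0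
    obtain ⟨hq0F, rfl, hd0⟩ := hq0
    have hh : ∀ i, q0.1 i ≠ 0 := by
      intro i h0
      have := hdh q0 hq0F i
      rw [h0, zero_dvd_iff] at this
      exact hw this
    have hdi : Function.Injective d := by
      intro i k hik
      by_contra hne
      have h1 := hdz q0 hq0F i k (Ne.symm hne)
      have h2 : q0.2 i - q0.2 k = 0 := by
        have := congrFun hd0 i
        have := congrFun hd0 k
        simp only at *
        omega
      rw [h2, zero_dvd_iff] at h1
      exact hw h1
    have hP := css_translate_ne (Nat.succ_pos m) (f j0) hdeg q0.1 d hh hdi (w j0)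
    set P := ∑ i, Polynomial.C (q0.1 i) * Polynomial.taylor (d i) (f j0) - Polynomial.C (w j0)
      with hPdef
    have hPd : P.natDegree ≤ (f j0).natDegree := by
      rw [hPdef]
      rw [Polynomial.natDegree_sub_C]
      refine Polynomial.natDegree_sum_le_of_forall_le _ _ fun i _ => ?_
      refine (Polynomial.natDegree_C_mul_le _ _).trans ?_
      exact (Polynomial.natDegree_taylor _ _).le
    refine le_trans ?_ ((Multiset.toFinset_card_le P.roots).trans (P.card_roots'.trans hPd))
    refine Finset.card_le_card_of_injOn (fun q => q.2 0) ?_ ?_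
    · intro q hq
      rw [Finset.mem_coe, Finset.mem_filter, Prod.mk.injEq] at hq
      obtain ⟨hqF, hq1, hq2⟩ := hq
      simp only [Finset.mem_coe, Multiset.mem_toFinset]
      rw [Polynomial.mem_roots hP, Polynomial.IsRoot, hPdef]
      simp only [Polynomial.eval_sub, Polynomial.eval_finsetSum, Polynomial.eval_mul,
        Polynomial.eval_C, Polynomial.taylor_eval]
      rw [sub_eq_zero, ← hF q hqF j0]
      refine Finset.sum_congr rfl fun i _ => ?_
      rw [hq1, ← congrFun hq2 i]
      congr 2
      ring
    · intro q hq q' hq' hqq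
      rw [Finset.mem_coe, Finset.mem_filter, Prod.mk.injEq] at hq hq'
      obtain ⟨-, hq1, hq2⟩ := hq
      obtain ⟨-, hq1', hq2'⟩ := hq'
      refine Prod.ext (hq1.trans hq1'.symm) (funext fun i => ?_)
      have e1 := congrFun hq2 i
      have e2 := congrFun hq2' i
      simp only at e1 e2 hqq
      omega

theorem css_count {t s : ℕ} (f : Fin t → Polynomial ℤ) (Ψ : MvPolynomial (Fin t) ℤ)
    (g : Fin s → Fin (2 * s)) (hg : StrictMono g) (Y : ℝ) (M : ℕ)
    (hM : ∀ w : Fin t → ℤ, MvPolynomial.eval w Ψ ≠ 0 → (∀ j, |(w j : ℝ)| ≤ Y) →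
      ∀ F : Finset ((Fin s → ℤ) × (Fin s → ℤ)),
        (∀ q ∈ F, ∀ j, ∑ l, q.1 l * (f j).eval (q.2 l) = w j) → F.card ≤ M)
    (I J : Finset ℤ) (F : Finset ((Fin (2 * s) → ℤ) × (Fin (2 * s) → ℤ)))
    (hI : ∀ p ∈ F, ∀ i, p.1 i ∈ I) (hJ : ∀ p ∈ F, ∀ i, p.2 i ∈ J)
    (hsys : ∀ p ∈ F, ∀ j, ∑ i, p.1 i * (f j).eval (p.2 i) = 0)
    (hΨ : ∀ p ∈ F, MvPolynomial.eval
      (fun j => ∑ l : Fin s, p.1 (g l) * (f j).eval (p.2 (g l))) Ψ ≠ 0)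
    (hY : ∀ p ∈ F, ∀ j, |((∑ l : Fin s, p.1 (g l) * (f j).eval (p.2 (g l)) : ℤ) : ℝ)| ≤ Y) :
    F.card ≤ M * (I.card ^ s * J.card ^ s) := by
  classical
  have hcard : Fintype.card {i : Fin (2 * s) // ¬ i ∈ Set.range g} = s := by
    rw [Fintype.card_subtype_compl, Fintype.card_fin]
    have : Fintype.card {i : Fin (2 * s) // i ∈ Set.range g} = s := by
      have := Set.card_range_of_injective hg.injective
      rw [Fintype.card_fin] at this
      exact this
    omega
  have hsplit : ∀ φ : Fin (2 * s) → ℤ, ∑ i, φ i = ∑ l, φ (g l) +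
      ∑ i : {i : Fin (2 * s) // ¬ i ∈ Set.range g}, φ i := by
    intro φ
    rw [← Fintype.sum_subtype_add_sum_subtype (fun i => i ∈ Set.range g) φ]
    congr 1
    convert (Fintype.sum_equiv (Equiv.ofInjective g hg.injective) (fun l => φ (g l))
      (fun i => φ i) (fun l => rfl)).symm
  set T := (Fintype.piFinset (fun _ : {i : Fin (2 * s) // ¬ i ∈ Set.range g} => I)) ×ˢ
    (Fintype.piFinset (fun _ : {i : Fin (2 * s) // ¬ i ∈ Set.range g} => J)) with hT
  have hTc : T.card = I.card ^ s * J.card ^ s := by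
    rw [hT, Finset.card_product, Fintype.card_piFinset, Fintype.card_piFinset,
      Finset.prod_const, Finset.prod_const, Finset.card_univ, hcard]
  rw [← hTc]
  refine Finset.card_le_mul_card_image_of_maps_to (t := T)
    (f := fun p => (fun i => p.1 i, fun i => p.2 i)) ?_ M ?_
  · intro p hp
    rw [hT, Finset.mem_product, Fintype.mem_piFinset, Fintype.mem_piFinset]
    exact ⟨fun i => hI p hp i, fun i => hJ p hp i⟩
  · rintro ⟨a, b⟩ -
    set E := F.filter fun p => ((fun i : {i : Fin (2 * s) // ¬ i ∈ Set.range g} => p.1 i,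
      fun i : {i : Fin (2 * s) // ¬ i ∈ Set.range g} => p.2 i) :
      ({i : Fin (2 * s) // ¬ i ∈ Set.range g} → ℤ) ×
        ({i : Fin (2 * s) // ¬ i ∈ Set.range g} → ℤ)) = (a, b) with hE
    rcases Finset.eq_empty_or_nonempty E with he | ⟨p0, hp0⟩
    · rw [he]
      simp
    have hmem : ∀ p ∈ E, p ∈ F ∧ (∀ i : {i : Fin (2 * s) // ¬ i ∈ Set.range g}, p.1 i = a i) ∧
        (∀ i : {i : Fin (2 * s) // ¬ i ∈ Set.range g}, p.2 i = b i) := by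
      intro p hp
      rw [hE, Finset.mem_filter, Prod.mk.injEq] at hp
      exact ⟨hp.1, fun i => congrFun hp.2.1 i, fun i => congrFun hp.2.2 i⟩
    have hval : ∀ p ∈ E, ∀ j, ∑ l : Fin s, p.1 (g l) * (f j).eval (p.2 (g l)) =
        - ∑ i, a i * (f j).eval (b i) := by
      intro p hp j
      obtain ⟨h1, h2, h3⟩ := hmem p hp
      have := hsys p h1 j
      rw [hsplit] at this
      simp only [h2, h3] at this
      linarith
    have hw0 : (fun j => ∑ l : Fin s, p0.1 (g l) * (f j).eval (p0.2 (g l))) =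
      fun j => - ∑ i, a i * (f j).eval (b i) := funext (hval p0 hp0)
    have hp0F := (hmem p0 hp0).1
    have hinj : Set.InjOn (fun p : (Fin (2 * s) → ℤ) × (Fin (2 * s) → ℤ) =>
        ((fun l => p.1 (g l), fun l => p.2 (g l)) : (Fin s → ℤ) × (Fin s → ℤ))) E := by
      intro p hp p' hp' hpp
      rw [Finset.mem_coe] at hp hp'
      obtain ⟨-, h2, h3⟩ := hmem p hp
      obtain ⟨-, h2', h3'⟩ := hmem p' hp'
      simp only [Prod.mk.injEq] at hpp
      refine Prod.ext (funext fun i => ?_) (funext fun i => ?_)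
      · by_cases hi : i ∈ Set.range g
        · obtain ⟨l, rfl⟩ := hi
          exact congrFun hpp.1 l
        · exact (h2 ⟨i, hi⟩).trans (h2' ⟨i, hi⟩).symm
      · by_cases hi : i ∈ Set.range g
        · obtain ⟨l, rfl⟩ := hi
          exact congrFun hpp.2 l
        · exact (h3 ⟨i, hi⟩).trans (h3' ⟨i, hi⟩).symm
    rw [← Finset.card_image_of_injOn hinj]
    refine hM (fun j => - ∑ i, a i * (f j).eval (b i)) ?_ ?_ _ ?_
    · rw [← hw0]
      exact hΨ p0 hp0F
    · intro j
      have := hY p0 hp0F j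
      rwa [hval p0 hp0 j] at this
    · intro q hq j
      obtain ⟨p, hp, rfl⟩ := Finset.mem_image.1 hq
      exact hval p hp j

theorem css_final (G M R k Q I J x X E : ℝ) (s : ℕ) (hG : 0 ≤ G)
    (hIJ0 : 0 ≤ I) (hx : 0 ≤ x) (hX : 0 ≤ X) (hR : 0 ≤ R) {Z : ℝ}
    (hZ : Z ≤ G * (M * (I * J))) (hMR : M ≤ R) (hIJ : I * J ≤ (3 * x) ^ s * X ^ s)
    (hRX : R ≤ k * Q * E) (hJ : 0 ≤ J := by positivity) :
    Z ≤ G * (k * Q * 3 ^ s) * (x ^ s * X ^ s * E) := by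
  calc Z ≤ G * (M * (I * J)) := hZ
    _ ≤ G * (R * ((3 * x) ^ s * X ^ s)) := by
        refine mul_le_mul_of_nonneg_left ?_ hG
        exact mul_le_mul hMR hIJ (by positivity) hR
    _ ≤ G * ((k * Q * E) * ((3 * x) ^ s * X ^ s)) := by
        refine mul_le_mul_of_nonneg_left ?_ hG
        exact mul_le_mul_of_nonneg_right hRX (by positivity)
    _ = _ := by
        rw [mul_pow 3 x]
        ring

theorem css_main (s r t : ℕ) (hs : 1 ≤ s)
    (f : Fin t → Polynomial ℤ) (Ψ : MvPolynomial (Fin t) ℤ) (j0 : Fin t)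
    (hcore : ∀ w : Fin t → ℤ, MvPolynomial.eval w Ψ ≠ 0 →
      ∀ F : Finset ((Fin s → ℤ) × (Fin s → ℤ)),
      (∀ q ∈ F, ∀ j, ∑ l, q.1 l * (f j).eval (q.2 l) = w j) →
      F.card ≤ (f j0).natDegree *
        (3 * (MvPolynomial.eval w Ψ).natAbs.divisors.card) ^ (2 * s))
    (ε : ℝ) (hε : 0 < ε) :
    ∃ C X₀ : ℝ, ∀ X : ℝ, X₀ ≤ X →
      ({p : (Fin (2 * s) → ℤ) × (Fin (2 * s) → ℤ) |
          (∀ i, |(p.1 i : ℝ)| ≤ X ^ r) ∧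
          (∀ i, 1 ≤ p.2 i ∧ (p.2 i : ℝ) ≤ X) ∧
          (∀ j, ∑ i, p.1 i * (f j).eval (p.2 i) = 0) ∧
          (∃ g : Fin s → Fin (2 * s), StrictMono g ∧
            MvPolynomial.eval
              (fun j => ∑ l : Fin s, p.1 (g l) * (f j).eval (p.2 (g l))) Ψ ≠ 0)}.ncard : ℝ) ≤
        C * X ^ (((r : ℝ) + 1) * (s : ℝ) + ε) := by
  classical
  -- size bounds
  choose Cf Af hCf hfb using fun j => css_poly_bound (f j)
  obtain ⟨CΨ, AΨ, hCΨ, hΨb⟩ := css_eval_bound Ψ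
  set K : ℝ := s * ∑ j, Cf j with hK
  clear_value K
  set B : ℕ := r + ∑ j, Af j with hB
  clear_value B
  have hs1 : (1 : ℝ) ≤ s := by
    exact_mod_cast hs
  have hCfle : ∀ j, Cf j ≤ ∑ j, Cf j := fun j =>
    Finset.single_le_sum (f := Cf) (fun i _ => by linarith [hCf i]) (Finset.mem_univ j)
  have hK1 : 1 ≤ K := by
    have h1 := hCfle j0
    have h2 := hCf j0
    rw [hK]
    nlinarith
  set A : ℕ := B * AΨ with hA
  clear_value A
  set Cc : ℝ := CΨ * K ^ AΨ with hCc
  clear_value Cc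
  have hCcNonneg : 0 ≤ Cc := by rw [hCc]; positivity
  set δ : ℝ := ε / (2 * s * (A + 1)) with hδdef
  clear_value δ
  have hδ : 0 < δ := by rw [hδdef]; positivity
  obtain ⟨Cd, hCd, hdb⟩ := css_divisor_bound δ hδ
  set k := (f j0).natDegree with hk
  clear_value k
  set G : ℕ := (Finset.univ : Finset (Fin s → Fin (2 * s))).card with hG
  clear_value G
  refine ⟨G * (k * (3 * (Cd * Cc ^ δ)) ^ (2 * s) * 3 ^ s), 1, fun X hX => ?_⟩
  have hX0 : 0 < X := by linarith
  set Y : ℝ := K * X ^ B with hY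
  clear_value Y
  have hY1 : 1 ≤ Y := by
    have : 1 ≤ X ^ B := one_le_pow₀ hX
    rw [hY]
    nlinarith
  set R : ℝ := k * (3 * (Cd * (Cc * X ^ A) ^ δ)) ^ (2 * s) with hR
  clear_value R
  have hR0 : 0 ≤ R := by rw [hR]; positivity
  set M : ℕ := ⌊R⌋₊ with hM
  have hMb : ∀ w : Fin t → ℤ, MvPolynomial.eval w Ψ ≠ 0 → (∀ j, |(w j : ℝ)| ≤ Y) →
      ∀ F : Finset ((Fin s → ℤ) × (Fin s → ℤ)),
        (∀ q ∈ F, ∀ j, ∑ l, q.1 l * (f j).eval (q.2 l) = w j) → F.card ≤ M := by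
    intro w hw hwY F hF
    have h1 := hcore w hw F hF
    apply Nat.le_floor
    have h2 : (F.card : ℝ) ≤ ((k * (3 * (MvPolynomial.eval w Ψ).natAbs.divisors.card) ^
      (2 * s) : ℕ) : ℝ) := by exact_mod_cast h1
    refine h2.trans ?_
    push_cast
    rw [hR]
    have h3 := hdb (MvPolynomial.eval w Ψ).natAbs (by simpa using hw)
    have h4 : (((MvPolynomial.eval w Ψ).natAbs : ℕ) : ℝ) ≤ Cc * X ^ A := by
      have h5 := hΨb Y w hY1 hwY
      rw [Nat.cast_natAbs, Int.cast_abs]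
      refine h5.trans (le_of_eq ?_)
      rw [hY, hCc, hA, mul_pow, pow_mul]
      ring
    have h6 : (((MvPolynomial.eval w Ψ).natAbs : ℕ) : ℝ) ^ δ ≤ (Cc * X ^ A) ^ δ :=
      Real.rpow_le_rpow (by positivity) h4 hδ.le
    have h7 : (((MvPolynomial.eval w Ψ).natAbs.divisors.card : ℕ) : ℝ) ≤
        Cd * (Cc * X ^ A) ^ δ :=
      h3.trans (mul_le_mul_of_nonneg_left h6 (by linarith))
    gcongr
  set I : Finset ℤ := Finset.Icc (-⌊X ^ r⌋) ⌊X ^ r⌋ with hI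
  clear_value I
  set J : Finset ℤ := Finset.Icc 1 ⌊X⌋ with hJ
  clear_value J
  have hXr1 : 1 ≤ X ^ r := one_le_pow₀ hX
  have hIc : (I.card : ℝ) ≤ 3 * X ^ r := by
    have h0 : 0 ≤ ⌊X ^ r⌋ := Int.floor_nonneg.2 (by linarith)
    have h1 : (I.card : ℤ) = 2 * ⌊X ^ r⌋ + 1 := by
      rw [hI, Int.card_Icc, Int.toNat_of_nonneg (by omega)]
      ring
    have h2 : (I.card : ℝ) = 2 * (⌊X ^ r⌋ : ℝ) + 1 := by exact_mod_cast h1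
    have := Int.floor_le (X ^ r)
    rw [h2]
    linarith
  have hJc : (J.card : ℝ) ≤ X := by
    have h0 : 0 ≤ ⌊X⌋ := Int.floor_nonneg.2 (by linarith)
    have h1 : (J.card : ℤ) = ⌊X⌋ := by
      rw [hJ, Int.card_Icc, Int.toNat_of_nonneg (by omega)]
      ring
    have h2 : (J.card : ℝ) = (⌊X⌋ : ℝ) := by exact_mod_cast h1
    rw [h2]
    exact Int.floor_le X
  set S := {p : (Fin (2 * s) → ℤ) × (Fin (2 * s) → ℤ) |
          (∀ i, |(p.1 i : ℝ)| ≤ X ^ r) ∧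
          (∀ i, 1 ≤ p.2 i ∧ (p.2 i : ℝ) ≤ X) ∧
          (∀ j, ∑ i, p.1 i * (f j).eval (p.2 i) = 0) ∧
          (∃ g : Fin s → Fin (2 * s), StrictMono g ∧
            MvPolynomial.eval
              (fun j => ∑ l : Fin s, p.1 (g l) * (f j).eval (p.2 (g l))) Ψ ≠ 0)} with hS
  have hSI : ∀ p ∈ S, ∀ i, p.1 i ∈ I := by
    intro p hp i
    have := abs_le.1 (hp.1 i)
    rw [hI, Finset.mem_Icc]
    refine ⟨?_, Int.le_floor.2 this.2⟩
    have : -(p.1 i) ≤ ⌊X ^ r⌋ := Int.le_floor.2 (by push_cast; linarith [this.1])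
    omega
  have hSJ : ∀ p ∈ S, ∀ i, p.2 i ∈ J := by
    intro p hp i
    rw [hJ, Finset.mem_Icc]
    exact ⟨(hp.2.1 i).1, Int.le_floor.2 (hp.2.1 i).2⟩
  have hSfin : S.Finite := by
    refine Set.Finite.subset (Finset.finite_toSet
      ((Fintype.piFinset (fun _ : Fin (2 * s) => I)) ×ˢ
        (Fintype.piFinset (fun _ : Fin (2 * s) => J)))) ?_
    intro p hp
    rw [Finset.mem_coe, Finset.mem_product, Fintype.mem_piFinset, Fintype.mem_piFinset]
    exact ⟨hSI p hp, hSJ p hp⟩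
  set Z := hSfin.toFinset with hZ
  have hZS : ∀ p, p ∈ Z → p ∈ S := fun p hp => hSfin.mem_toFinset.1 hp
  have hbound : ∀ p ∈ S, ∀ (g : Fin s → Fin (2 * s)) (j : Fin t),
      |((∑ l : Fin s, p.1 (g l) * (f j).eval (p.2 (g l)) : ℤ) : ℝ)| ≤ Y := by
    intro p hp g j
    push_cast
    refine (Finset.abs_sum_le_sum_abs _ _).trans ?_
    have h1 : ∀ l ∈ (Finset.univ : Finset (Fin s)),
        |(p.1 (g l) : ℝ) * (((f j).eval (p.2 (g l)) : ℤ) : ℝ)| ≤ (∑ j, Cf j) * X ^ B := by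
      intro l _
      rw [abs_mul]
      have hz : |(p.2 (g l) : ℝ)| ≤ X := by
        rw [abs_of_nonneg]
        · exact (hp.2.1 _).2
        · have := (hp.2.1 (g l)).1
          have h' : (0 : ℤ) ≤ p.2 (g l) := by omega
          exact_mod_cast h'
      have h2 := hfb j X (p.2 (g l)) hX hz
      have h3 := hp.1 (g l)
      have hAle : Af j ≤ ∑ j, Af j :=
        Finset.single_le_sum (f := Af) (fun i _ => Nat.zero_le _) (Finset.mem_univ j)
      have h4 : X ^ Af j ≤ X ^ (∑ j, Af j) := pow_le_pow_right₀ hX hAle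
      calc _ ≤ X ^ r * (Cf j * X ^ Af j) := mul_le_mul h3 h2 (abs_nonneg _) (by positivity)
        _ ≤ X ^ r * ((∑ j, Cf j) * X ^ (∑ j, Af j)) := by
            refine mul_le_mul_of_nonneg_left ?_ (by positivity)
            exact mul_le_mul (hCfle j) h4 (by positivity)
              (by linarith [hCfle j, hCf j])
        _ = _ := by rw [hB, pow_add]; ring
    refine (Finset.sum_le_card_nsmul _ _ _ h1).trans (le_of_eq ?_)
    rw [Finset.card_univ, Fintype.card_fin, nsmul_eq_mul, hY, hK]
    ring
  have hcover : Z ⊆ (Finset.univ : Finset (Fin s → Fin (2 * s))).biUnion (fun g =>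
      Z.filter (fun p => StrictMono g ∧ MvPolynomial.eval
              (fun j => ∑ l : Fin s, p.1 (g l) * (f j).eval (p.2 (g l))) Ψ ≠ 0)) := by
    intro p hp
    obtain ⟨g, hg⟩ := (hZS p hp).2.2.2
    rw [Finset.mem_biUnion]
    exact ⟨g, Finset.mem_univ _, Finset.mem_filter.2 ⟨hp, hg⟩⟩
  have hZc : Z.card ≤ G * (M * (I.card ^ s * J.card ^ s)) := by
    rw [hG]
    refine (Finset.card_le_card hcover).trans (Finset.card_biUnion_le_card_mul _ _ _ ?_)
    intro g _
    by_cases hg : StrictMono g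
    · refine css_count f Ψ g hg Y M hMb I J _ ?_ ?_ ?_ ?_ ?_
      · intro p hp
        exact hSI p (hZS p (Finset.mem_filter.1 hp).1)
      · intro p hp
        exact hSJ p (hZS p (Finset.mem_filter.1 hp).1)
      · intro p hp
        exact (hZS p (Finset.mem_filter.1 hp).1).2.2.1
      · intro p hp
        exact (Finset.mem_filter.1 hp).2.2
      · intro p hp
        exact hbound p (hZS p (Finset.mem_filter.1 hp).1) g
    · rw [Finset.filter_false_of_mem]
      · simp
      · intro p _ h
        exact hg h.1
  rw [Set.ncard_eq_toFinset_card S hSfin]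
  have hZr : (Z.card : ℝ) ≤ G * (M * ((I.card : ℝ) ^ s * (J.card : ℝ) ^ s)) := by
    exact_mod_cast hZc
  have hMR : (M : ℝ) ≤ R := Nat.floor_le hR0
  have hIJ : (I.card : ℝ) ^ s * (J.card : ℝ) ^ s ≤ (3 * X ^ r) ^ s * X ^ s := by
    gcongr
  have hRX : R ≤ k * (3 * (Cd * Cc ^ δ)) ^ (2 * s) * X ^ ε := by
    have h1 : (Cc * X ^ A) ^ δ = Cc ^ δ * X ^ (A * δ) := by
      rw [Real.mul_rpow hCcNonneg (by positivity), ← Real.rpow_natCast X A, ← Real.rpow_mul hX0.le]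
    have h2 : (X ^ ((A : ℝ) * δ)) ^ (2 * s) ≤ X ^ ε := by
      rw [← Real.rpow_natCast, ← Real.rpow_mul hX0.le]
      apply Real.rpow_le_rpow_of_exponent_le hX
      rw [hδdef]
      push_cast
      have h3 : (A : ℝ) * (ε / (2 * s * (A + 1))) * (2 * s) = ε * (A / (A + 1)) := by
        field_simp
      rw [h3]
      have h4 : (A : ℝ) / (A + 1) ≤ 1 := by
        rw [div_le_one (by positivity)]
        linarith
      nlinarith
    calc R = k * (3 * (Cd * Cc ^ δ)) ^ (2 * s) * (X ^ ((A : ℝ) * δ)) ^ (2 * s) := by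
          rw [hR, h1, mul_assoc, ← mul_pow]
          ring
      _ ≤ _ := by
          refine mul_le_mul_of_nonneg_left h2 ?_
          have : 0 ≤ Cc ^ δ := Real.rpow_nonneg hCcNonneg _
          positivity
  have hpow : X ^ (((r : ℝ) + 1) * (s : ℝ) + ε) = (X ^ r) ^ s * X ^ s * X ^ ε := by
    rw [Real.rpow_add hX0, ← pow_mul, ← pow_add, ← Real.rpow_natCast]
    push_cast
    congr 2
    ring
  rw [hpow]
  exact css_final _ _ _ _ _ _ _ _ _ _ s (by positivity) (by positivity) (by positivity)
    (by positivity) hR0 hZr hMR hIJ hRX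

theorem count_type_Ss_solutions
    (s r : ℕ) (hs : 2 ≤ s) (hr : 1 ≤ r)
    (f : Fin (2 * s - 1) → Polynomial ℤ) (hf : WellConditioned f)
    (Ψ : MvPolynomial (Fin (2 * s - 1)) ℤ) (hΨ : Ψ ≠ 0)
    (hvanish : MvPolynomial.aeval (fun j => sigmaPoly f (s - 1) j) Ψ = 0)
    (hnonvanish : MvPolynomial.aeval (fun j => sigmaPoly f s j) Ψ ≠ 0)
    (ε : ℝ) (hε : 0 < ε) :
    ∃ C X₀ : ℝ, ∀ X : ℝ, X₀ ≤ X →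
      ({p : (Fin (2 * s) → ℤ) × (Fin (2 * s) → ℤ) |
          (∀ i, |(p.1 i : ℝ)| ≤ X ^ r) ∧
          (∀ i, 1 ≤ p.2 i ∧ (p.2 i : ℝ) ≤ X) ∧
          (∀ j, ∑ i, p.1 i * (f j).eval (p.2 i) = 0) ∧
          (∃ g : Fin s → Fin (2 * s), StrictMono g ∧
            MvPolynomial.eval
              (fun j => ∑ l : Fin s, p.1 (g l) * (f j).eval (p.2 (g l))) Ψ ≠ 0)}.ncard : ℝ) ≤
        C * X ^ (((r : ℝ) + 1) * (s : ℝ) + ε) := by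
  have htpos : 0 < 2 * s - 1 := by omega
  have hdegs : ∀ n : ℕ, ∀ hn : n < 2 * s - 1,
      n ≤ (f ⟨2 * s - 1 - 1 - n, by omega⟩).natDegree := by
    intro n
    induction n with
    | zero => intro _; exact Nat.zero_le _
    | succ n ih =>
      intro hn
      have h1 := ih (by omega)
      have h2 := hf.2.1 ⟨2 * s - 1 - 1 - (n + 1), by omega⟩ ⟨2 * s - 1 - 1 - n, by omega⟩
        (by rw [Fin.mk_lt_mk]; omega)
      omega
  have hdeg : s ≤ (f ⟨0, htpos⟩).natDegree := by
    have h1 := hdegs (2 * s - 1 - 1) (by omega)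
    have h2 : (⟨2 * s - 1 - 1 - (2 * s - 1 - 1), by omega⟩ : Fin (2 * s - 1)) = ⟨0, htpos⟩ :=
      Fin.ext (Nat.sub_self _)
    rw [h2] at h1
    omega
  refine css_main s r (2 * s - 1) (by omega) f Ψ ⟨0, htpos⟩ ?_ ε hε
  clear hnonvanish hdegs hf
  generalize 2 * s - 1 = t at *
  obtain ⟨m, rfl⟩ : ∃ m, s = m + 1 := ⟨s - 1, by omega⟩
  intro w hw F hF
  exact css_core f Ψ hvanish ⟨0, htpos⟩ hdeg w hw F hF
end

section
/- Writing s_j = h_1 z_1^j + h_2 z_2^j + h_3 z_3^j for 0 ≤ j ≤ 4, there exists a polynomial F ∈ ℤ[z_1,z_2,z_3,h_1,h_2,h_3], bihomogeneous of degree 6 in (z_1,z_2,z_3) and degree 3 in (h_1,h_2,h_3), such that identically (s_1 s_4 − s_2 s_3)²(s_0 s_2 − s_1²) − (s_0 s_4 − s_2²)(s_1 s_3 − s_2²)² = h_1 h_2 h_3 (z_1−z_2)²(z_2−z_3)²(z_3−z_1)²·F(z_1,z_2,z_3;h_1,h_2,h_3). -/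
open Finset

/-- The power sum `s_j = h_1 z_1^j + h_2 z_2^j + h_3 z_3^j`, as a polynomial in the six
variables `z_1, z_2, z_3` (encoded as `Sum.inl`) and `h_1, h_2, h_3` (encoded as
`Sum.inr`). -/
noncomputable def powerSum (j : ℕ) : MvPolynomial (Fin 3 ⊕ Fin 3) ℤ :=
  ∑ i : Fin 3, MvPolynomial.X (Sum.inr i) * MvPolynomial.X (Sum.inl i) ^ j

/-- `s_j` is homogeneous of degree `j` in the `z` variables. -/
lemma powerSum_homog_z (j : ℕ) : MvPolynomial.IsWeightedHomogeneous
    (Sum.elim (fun _ : Fin 3 => (1 : ℕ)) (fun _ : Fin 3 => 0)) (powerSum j) j := by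
  unfold powerSum
  refine MvPolynomial.IsWeightedHomogeneous.sum _ _ _ fun i _ => ?_
  have h1 := MvPolynomial.isWeightedHomogeneous_X ℤ
    (Sum.elim (fun _ : Fin 3 => (1 : ℕ)) (fun _ : Fin 3 => 0)) (Sum.inr i)
  have h2 := MvPolynomial.isWeightedHomogeneous_X ℤ
    (Sum.elim (fun _ : Fin 3 => (1 : ℕ)) (fun _ : Fin 3 => 0)) (Sum.inl i)
  simpa using h1.mul (h2.pow j)

/-- `s_j` is homogeneous of degree `1` in the `h` variables. -/
lemma powerSum_homog_h (j : ℕ) : MvPolynomial.IsWeightedHomogeneous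
    (Sum.elim (fun _ : Fin 3 => (0 : ℕ)) (fun _ : Fin 3 => 1)) (powerSum j) 1 := by
  unfold powerSum
  refine MvPolynomial.IsWeightedHomogeneous.sum _ _ _ fun i _ => ?_
  have h1 := MvPolynomial.isWeightedHomogeneous_X ℤ
    (Sum.elim (fun _ : Fin 3 => (0 : ℕ)) (fun _ : Fin 3 => 1)) (Sum.inr i)
  have h2 := MvPolynomial.isWeightedHomogeneous_X ℤ
    (Sum.elim (fun _ : Fin 3 => (0 : ℕ)) (fun _ : Fin 3 => 1)) (Sum.inl i)
  simpa using h1.mul (h2.pow j)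

/-- The Hankel determinant of `s_0, …, s_4` is `h_1 h_2 h_3` times the discriminant. -/
lemma hankel_det :
    powerSum 0 * (powerSum 2 * powerSum 4 - powerSum 3 ^ 2)
      - powerSum 1 * (powerSum 1 * powerSum 4 - powerSum 2 * powerSum 3)
      + powerSum 2 * (powerSum 1 * powerSum 3 - powerSum 2 ^ 2) =
    MvPolynomial.X (Sum.inr 0) * MvPolynomial.X (Sum.inr 1) * MvPolynomial.X (Sum.inr 2) *
        (MvPolynomial.X (Sum.inl 0) - MvPolynomial.X (Sum.inl 1)) ^ 2 *
        (MvPolynomial.X (Sum.inl 1) - MvPolynomial.X (Sum.inl 2)) ^ 2 *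
        (MvPolynomial.X (Sum.inl 2) - MvPolynomial.X (Sum.inl 0)) ^ 2 := by
  simp only [powerSum, Fin.sum_univ_three]
  ring

theorem degree_three_polynomial_identity :
    ∃ F : MvPolynomial (Fin 3 ⊕ Fin 3) ℤ,
      MvPolynomial.IsWeightedHomogeneous
        (Sum.elim (fun _ : Fin 3 => (1 : ℕ)) (fun _ : Fin 3 => 0)) F 6 ∧
      MvPolynomial.IsWeightedHomogeneous
        (Sum.elim (fun _ : Fin 3 => (0 : ℕ)) (fun _ : Fin 3 => 1)) F 3 ∧
      (powerSum 1 * powerSum 4 - powerSum 2 * powerSum 3) ^ 2 *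
          (powerSum 0 * powerSum 2 - powerSum 1 ^ 2) -
        (powerSum 0 * powerSum 4 - powerSum 2 ^ 2) *
          (powerSum 1 * powerSum 3 - powerSum 2 ^ 2) ^ 2 =
      MvPolynomial.X (Sum.inr 0) * MvPolynomial.X (Sum.inr 1) * MvPolynomial.X (Sum.inr 2) *
        (MvPolynomial.X (Sum.inl 0) - MvPolynomial.X (Sum.inl 1)) ^ 2 *
        (MvPolynomial.X (Sum.inl 1) - MvPolynomial.X (Sum.inl 2)) ^ 2 *
        (MvPolynomial.X (Sum.inl 2) - MvPolynomial.X (Sum.inl 0)) ^ 2 * F := by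
  
  refine ⟨powerSum 1 ^ 2 * powerSum 4 - powerSum 2 ^ 3, ?_, ?_, ?_⟩
  · rw [← MvPolynomial.mem_weightedHomogeneousSubmodule]
    refine Submodule.sub_mem _ ?_ ?_ <;> rw [MvPolynomial.mem_weightedHomogeneousSubmodule]
    · exact ((powerSum_homog_z 1).pow 2).mul (powerSum_homog_z 4)
    · exact (powerSum_homog_z 2).pow 3
  · rw [← MvPolynomial.mem_weightedHomogeneousSubmodule]
    refine Submodule.sub_mem _ ?_ ?_ <;> rw [MvPolynomial.mem_weightedHomogeneousSubmodule]
    · exact ((powerSum_homog_h 1).pow 2).mul (powerSum_homog_h 4)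
    · exact (powerSum_homog_h 2).pow 3
  · rw [← hankel_det]
    ring
end

section
/- Let k > r ≥ 1 and κ ≥ 1 be integers, let s be a positive integer, and let X ≥ 1 be real. Let U_2 denote the number of integral solutions of the combined system ∑_{i=1}^{r(r−1)/2}(x_i^j − y_i^j) = binom(j,r)·∑_{l=1}^{2κ} h_l z_l^{j−r} for r ≤ j ≤ k, together with ∑_{i=1}^{r(r−1)/2}(x_i^j − y_i^j) = 0 for 1 ≤ j < r, subject to 1 ≤ x_i, y_i ≤ 2X, 1 ≤ z_l ≤ X and |h_l| ≤ sX^r. Let J denote the number of integral solutions of ∑_{i=1}^{r(r−1)/2}(x_i^j − y_i^j) = 0 (1 ≤ j ≤ r−1) with 1 ≤ x_i, y_i ≤ 2X, and let A denote the number of integral solutions of ∑_{l=1}^{2κ} h_l z_l^{j−r} = 0 (r ≤ j ≤ k) with |h_l| ≤ sX^r and 1 ≤ z_l ≤ X. Then U_2 ≤ J·A. -/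
open Finset

lemma aux_conv {α G : Type*} [AddCommGroup G] [DecidableEq G] (S : Finset α) (F : α → G)
    (ν : α → α) (hν : ∀ a ∈ S, ν a ∈ S) (hνν : ∀ a, ν (ν a) = a) (hF : ∀ a, F (ν a) = - F a)
    (n : G) :
    ((S ×ˢ S).filter (fun q => F q.1 + F q.2 = n)).card ≤
      ((S ×ˢ S).filter (fun q => F q.1 + F q.2 = 0)).card := by
  classical
  set c : G → ℕ := fun m => (S.filter (fun a => F a = m)).card with hc
  set T := S.image F with hT
  have hN : ∀ n : G, ((S ×ˢ S).filter (fun q => F q.1 + F q.2 = n)).card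
      = ∑ m ∈ T, c m * c (n - m) := by
    intro n
    rw [Finset.card_eq_sum_card_fiberwise (f := fun q => F q.1) (t := T)]
    · refine Finset.sum_congr rfl fun m _ => ?_
      rw [hc, ← Finset.card_product]
      congr 1
      ext ⟨a, b⟩
      simp only [Finset.mem_filter, Finset.mem_product]
      constructor
      · rintro ⟨⟨⟨h1, h2⟩, h3⟩, h4⟩
        exact ⟨⟨h1, h4⟩, h2, by rw [← h3, ← h4]; abel⟩
      · rintro ⟨⟨h1, h4⟩, h2, h3⟩
        exact ⟨⟨⟨h1, h2⟩, by rw [h3, h4]; abel⟩, h4⟩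
    · intro q hq
      simp only [Finset.coe_filter, Finset.mem_product, Set.mem_ofPred_eq] at hq
      exact Finset.mem_coe.2 (Finset.mem_image_of_mem F hq.1.1)
  have hneg : ∀ m, c (0 - m) = c m := by
    intro m
    refine Finset.card_bij' (fun a _ => ν a) (fun a _ => ν a) ?_ ?_ ?_ ?_
    · intro a ha
      simp only [Finset.mem_filter] at ha ⊢
      exact ⟨hν a ha.1, by rw [hF, ha.2]; simp⟩
    · intro a ha
      simp only [Finset.mem_filter] at ha ⊢
      exact ⟨hν a ha.1, by rw [hF, ha.2]; simp⟩
    · intro a _; exact hνν a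
    · intro a _; exact hνν a
  have hsupp : ∀ m, m ∉ T → c m = 0 := by
    intro m hm
    rw [hc]
    simp only [Finset.card_eq_zero, Finset.filter_eq_empty_iff]
    intro a ha h
    exact hm (h ▸ Finset.mem_image_of_mem F ha)
  have hsq : ∑ m ∈ T, c (n - m) ^ 2 ≤ ∑ m ∈ T, c m ^ 2 := by
    rw [← Finset.sum_image (f := fun m => c m ^ 2) (g := fun m => n - m) (s := T)
      (fun a _ b _ h => sub_right_injective h)]
    calc ∑ m ∈ T.image (fun m => n - m), c m ^ 2
        ≤ ∑ m ∈ T.image (fun m => n - m) ∪ T, c m ^ 2 :=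
          Finset.sum_le_sum_of_subset Finset.subset_union_left
      _ = ∑ m ∈ T, c m ^ 2 := by
          symm
          apply Finset.sum_subset Finset.subset_union_right
          intro m _ hm
          simp [hsupp m hm]
  rw [hN n, hN 0]
  have h0 : ∑ m ∈ T, c m * c (0 - m) = ∑ m ∈ T, c m ^ 2 :=
    Finset.sum_congr rfl fun m _ => by rw [hneg]; ring
  rw [h0]
  have h2 : 2 * ∑ m ∈ T, c m * c (n - m) ≤ ∑ m ∈ T, c m ^ 2 + ∑ m ∈ T, c (n - m) ^ 2 := by
    rw [Finset.mul_sum, ← Finset.sum_add_distrib]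
    refine Finset.sum_le_sum fun m _ => ?_
    have := two_mul_le_add_sq (c m) (c (n - m))
    linarith
  omega

lemma aux_box {ι : Type*} [Finite ι] (H X : ℝ) :
    {w : (ι → ℤ) × (ι → ℤ) | (∀ l, |(w.1 l : ℝ)| ≤ H) ∧
      (∀ l, 1 ≤ w.2 l ∧ (w.2 l : ℝ) ≤ X)}.Finite := by
  have := Fintype.ofFinite ι
  classical
  refine ((Set.finite_Icc (fun _ : ι => -⌊H⌋) (fun _ => ⌊H⌋)).prod
    (Set.finite_Icc (fun _ : ι => (1 : ℤ)) (fun _ => ⌊X⌋))).subset ?_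
  rintro w ⟨h1, h2⟩
  refine ⟨⟨fun l => ?_, fun l => ?_⟩, fun l => (h2 l).1, fun l => Int.le_floor.2 (h2 l).2⟩
  · have h := (abs_le.1 (h1 l)).1
    have : -w.1 l ≤ ⌊H⌋ := Int.le_floor.2 (by push_cast; linarith)
    show -⌊H⌋ ≤ w.1 l
    linarith
  · exact Int.le_floor.2 (abs_le.1 (h1 l)).2

lemma aux_fib (k r κ : ℕ) (H X : ℝ) (n : Finset.Icc r k → ℤ) :
    {w : (Fin (2 * κ) → ℤ) × (Fin (2 * κ) → ℤ) |
        (∀ l, |(w.1 l : ℝ)| ≤ H) ∧ (∀ l, 1 ≤ w.2 l ∧ (w.2 l : ℝ) ≤ X) ∧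
        (∀ j : Finset.Icc r k, ∑ l, w.1 l * (w.2 l) ^ ((j : ℕ) - r) = n j)}.ncard ≤
    {w : (Fin (2 * κ) → ℤ) × (Fin (2 * κ) → ℤ) |
        (∀ l, |(w.1 l : ℝ)| ≤ H) ∧ (∀ l, 1 ≤ w.2 l ∧ (w.2 l : ℝ) ≤ X) ∧
        (∀ j : Finset.Icc r k, ∑ l, w.1 l * (w.2 l) ^ ((j : ℕ) - r) = 0)}.ncard := by
  classical
  let ε : Fin κ ⊕ Fin κ ≃ Fin (2 * κ) := finSumFinEquiv.trans (finCongr (two_mul κ).symm)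
  let e1 : (Fin (2 * κ) → ℤ) ≃ (Fin κ → ℤ) × (Fin κ → ℤ) :=
    (Equiv.arrowCongr ε.symm (Equiv.refl ℤ)).trans (Equiv.sumArrowEquivProdArrow _ _ _)
  let Φ : (Fin (2 * κ) → ℤ) × (Fin (2 * κ) → ℤ) ≃
      ((Fin κ → ℤ) × (Fin κ → ℤ)) × ((Fin κ → ℤ) × (Fin κ → ℤ)) :=
    (Equiv.prodCongr e1 e1).trans (Equiv.prodProdProdComm _ _ _ _)
  let F : (Fin κ → ℤ) × (Fin κ → ℤ) → (Finset.Icc r k → ℤ) :=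
    fun a j => ∑ l, a.1 l * (a.2 l) ^ ((j : ℕ) - r)
  let S := (aux_box (ι := Fin κ) H X).toFinset
  have hS : ∀ a, a ∈ S ↔ (∀ l, |(a.1 l : ℝ)| ≤ H) ∧ (∀ l, 1 ≤ a.2 l ∧ (a.2 l : ℝ) ≤ X) := by
    intro a; simp [S]
  have key : ∀ n : Finset.Icc r k → ℤ, {w : (Fin (2 * κ) → ℤ) × (Fin (2 * κ) → ℤ) |
        (∀ l, |(w.1 l : ℝ)| ≤ H) ∧ (∀ l, 1 ≤ w.2 l ∧ (w.2 l : ℝ) ≤ X) ∧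
        (∀ j : Finset.Icc r k, ∑ l, w.1 l * (w.2 l) ^ ((j : ℕ) - r) = n j)}.ncard
      = ((S ×ˢ S).filter (fun q => F q.1 + F q.2 = n)).card := by
    intro n
    rw [← Set.ncard_coe_finset, ← Set.ncard_image_of_injective _ Φ.injective,
      Equiv.image_eq_preimage_symm]
    congr 1
    ext q
    obtain ⟨w, rfl⟩ := Φ.surjective q
    have hl : ∀ P : Fin (2 * κ) → Prop, (∀ l, P l) ↔
        (∀ l, P (ε (Sum.inl l))) ∧ (∀ l, P (ε (Sum.inr l))) := by
      intro P
      rw [← ε.forall_congr_right, Sum.forall]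
    have hsum : ∀ f : Fin (2 * κ) → ℤ, ∑ l, f l =
        ∑ l, f (ε (Sum.inl l)) + ∑ l, f (ε (Sum.inr l)) := by
      intro f
      rw [← ε.sum_comp, Fintype.sum_sum_type]
    have a1 : ∀ l, (Φ w).1.1 l = w.1 (ε (Sum.inl l)) := fun l => rfl
    have a2 : ∀ l, (Φ w).1.2 l = w.2 (ε (Sum.inl l)) := fun l => rfl
    have a3 : ∀ l, (Φ w).2.1 l = w.1 (ε (Sum.inr l)) := fun l => rfl
    have a4 : ∀ l, (Φ w).2.2 l = w.2 (ε (Sum.inr l)) := fun l => rfl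
    simp only [Set.mem_preimage, Equiv.symm_apply_apply, Set.mem_ofPred_eq, Finset.coe_filter,
      Finset.mem_product, hS, a1, a2, a3, a4, F, funext_iff, Pi.add_apply]
    rw [hl (fun l => |(w.1 l : ℝ)| ≤ H), hl (fun l => 1 ≤ w.2 l ∧ (w.2 l : ℝ) ≤ X)]
    simp only [hsum]
    tauto
  rw [key n]
  refine (aux_conv S F (fun a => (-a.1, a.2)) ?_ ?_ ?_ n).trans (key 0).symm.le
  · intro a ha
    rw [hS] at ha ⊢
    simpa using ha
  · intro a; simp
  · intro a
    funext j
    simp [F]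

theorem U2_le_J_mul_A
    (k r κ s : ℕ) (hr : 1 ≤ r) (hrk : r < k) (hκ : 1 ≤ κ) (hs : 1 ≤ s)
    (X : ℝ) (hX : 1 ≤ X) :
    -- U₂: solutions of the combined system
    ({q : ((Fin (r * (r - 1) / 2) → ℤ) × (Fin (r * (r - 1) / 2) → ℤ)) ×
          ((Fin (2 * κ) → ℤ) × (Fin (2 * κ) → ℤ)) |
        (∀ i, 1 ≤ q.1.1 i ∧ (q.1.1 i : ℝ) ≤ 2 * X) ∧
        (∀ i, 1 ≤ q.1.2 i ∧ (q.1.2 i : ℝ) ≤ 2 * X) ∧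
        (∀ l, |(q.2.1 l : ℝ)| ≤ (s : ℝ) * X ^ r) ∧
        (∀ l, 1 ≤ q.2.2 l ∧ (q.2.2 l : ℝ) ≤ X) ∧
        (∀ j ∈ Finset.Icc r k,
          ∑ i, ((q.1.1 i) ^ j - (q.1.2 i) ^ j) =
            (j.choose r : ℤ) * ∑ l, q.2.1 l * (q.2.2 l) ^ (j - r)) ∧
        (∀ j ∈ Finset.Ico 1 r, ∑ i, ((q.1.1 i) ^ j - (q.1.2 i) ^ j) = 0)}.ncard) ≤
    -- J: solutions of the Vinogradov system of degree r-1
    ({p : (Fin (r * (r - 1) / 2) → ℤ) × (Fin (r * (r - 1) / 2) → ℤ) |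
        (∀ i, 1 ≤ p.1 i ∧ (p.1 i : ℝ) ≤ 2 * X) ∧
        (∀ i, 1 ≤ p.2 i ∧ (p.2 i : ℝ) ≤ 2 * X) ∧
        (∀ j ∈ Finset.Ico 1 r, ∑ i, ((p.1 i) ^ j - (p.2 i) ^ j) = 0)}.ncard) *
    -- A: solutions of the auxiliary system
    ({w : (Fin (2 * κ) → ℤ) × (Fin (2 * κ) → ℤ) |
        (∀ l, |(w.1 l : ℝ)| ≤ (s : ℝ) * X ^ r) ∧
        (∀ l, 1 ≤ w.2 l ∧ (w.2 l : ℝ) ≤ X) ∧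
        (∀ j ∈ Finset.Icc r k, ∑ l, w.1 l * (w.2 l) ^ (j - r) = 0)}.ncard) := by
  classical
  set U := {q : ((Fin (r * (r - 1) / 2) → ℤ) × (Fin (r * (r - 1) / 2) → ℤ)) ×
          ((Fin (2 * κ) → ℤ) × (Fin (2 * κ) → ℤ)) |
        (∀ i, 1 ≤ q.1.1 i ∧ (q.1.1 i : ℝ) ≤ 2 * X) ∧
        (∀ i, 1 ≤ q.1.2 i ∧ (q.1.2 i : ℝ) ≤ 2 * X) ∧
        (∀ l, |(q.2.1 l : ℝ)| ≤ (s : ℝ) * X ^ r) ∧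
        (∀ l, 1 ≤ q.2.2 l ∧ (q.2.2 l : ℝ) ≤ X) ∧
        (∀ j ∈ Finset.Icc r k,
          ∑ i, ((q.1.1 i) ^ j - (q.1.2 i) ^ j) =
            (j.choose r : ℤ) * ∑ l, q.2.1 l * (q.2.2 l) ^ (j - r)) ∧
        (∀ j ∈ Finset.Ico 1 r, ∑ i, ((q.1.1 i) ^ j - (q.1.2 i) ^ j) = 0)} with hU
  set V := {p : (Fin (r * (r - 1) / 2) → ℤ) × (Fin (r * (r - 1) / 2) → ℤ) |
        (∀ i, 1 ≤ p.1 i ∧ (p.1 i : ℝ) ≤ 2 * X) ∧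
        (∀ i, 1 ≤ p.2 i ∧ (p.2 i : ℝ) ≤ 2 * X) ∧
        (∀ j ∈ Finset.Ico 1 r, ∑ i, ((p.1 i) ^ j - (p.2 i) ^ j) = 0)} with hV
  have hVf : V.Finite := by
    refine (aux_box (ι := Fin (r * (r - 1) / 2)) (2 * X) (2 * X)).subset ?_
    rintro p ⟨h1, h2, -⟩
    refine ⟨fun l => ?_, h2⟩
    have h3 : (1 : ℝ) ≤ p.1 l := by exact_mod_cast (h1 l).1
    rw [abs_of_nonneg (by linarith)]
    exact (h1 l).2
  by_cases hUf : U.Finite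
  swap
  · rw [Set.Infinite.ncard hUf]; exact Nat.zero_le _
  rw [Set.ncard_eq_toFinset_card U hUf, Set.ncard_eq_toFinset_card V hVf,
    mul_comm (hVf.toFinset.card)]
  refine Finset.card_le_mul_card_image_of_maps_to (f := Prod.fst) ?_ _ ?_
  · intro q hq
    rw [Set.Finite.mem_toFinset] at hq ⊢
    exact ⟨hq.1, hq.2.1, hq.2.2.2.2.2⟩
  · intro p _
    rcases Finset.eq_empty_or_nonempty (hUf.toFinset.filter (fun q => q.1 = p)) with h | ⟨q0, h0⟩
    · rw [h]; simp
    have hfib := aux_fib k r κ ((s : ℝ) * X ^ r) X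
      (fun j => ∑ l, q0.2.1 l * (q0.2.2 l) ^ ((j : ℕ) - r))
    simp only [Subtype.forall] at hfib
    refine le_trans ?_ hfib
    rw [← Set.ncard_coe_finset]
    refine Set.ncard_le_ncard_of_injOn Prod.snd ?_ ?_ ?_
    · intro q hq
      rw [Finset.mem_coe] at hq
      rw [Finset.mem_filter, Set.Finite.mem_toFinset] at hq h0
      refine ⟨hq.1.2.2.1, hq.1.2.2.2.1, fun j hj => ?_⟩
      have e1 := hq.1.2.2.2.2.1 j hj
      have e2 := h0.1.2.2.2.2.1 j hj
      rw [hq.2] at e1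
      rw [h0.2] at e2
      have hne : (j.choose r : ℤ) ≠ 0 := by
        exact_mod_cast (Nat.choose_pos (Finset.mem_Icc.1 hj).1).ne'
      exact mul_left_cancel₀ hne (e1.symm.trans e2)
    · intro q hq q' hq' h
      simp only [Finset.coe_filter, Set.mem_ofPred_eq] at hq hq'
      exact Prod.ext (hq.2.trans hq'.2.symm) h
    · exact (aux_box (ι := Fin (2 * κ)) ((s : ℝ) * X ^ r) X).subset
        fun w hw => ⟨hw.1, hw.2.1⟩
end
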